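/- arXiv:1912.03166 — 14 statements merged into one kernel-verified Lean document; each statement's English description precedes it below -/
import Mathlib

section
/- Let C = {x ∈ ℝⁿ : Ax − b ∈ K}, where A ∈ ℝ^{m×n} has full column rank and K ⊆ ℝ^m is a proper cone, and let F = {(α, β) ∈ ℝⁿ × ℝ : ∃ u ∈ K* with α = Aᵀu and β ≤ bᵀu}. If C is nonempty, then C° = cl F, i.e., every valid inequality (α, β) for C is the limit of pairs (α_ε, β_ε) obtained by Farkas aggregation: α_ε = Aᵀu_ε, β_ε ≤ bᵀu_ε for some u_ε ∈ K*. -/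
open Matrix

/-- A proper cone: closed, convex, closed under nonnegative scaling,
pointed (`K ∩ (−K) = {0}`), with nonempty interior. -/
def IsProperCone {n : ℕ} (K : Set (Fin n → ℝ)) : Prop :=
  IsClosed K ∧ Convex ℝ K ∧ (∀ x ∈ K, ∀ t : ℝ, 0 ≤ t → t • x ∈ K) ∧
    K ∩ (-K) = {0} ∧ (interior K).Nonempty

/-- The dual cone `K* = {u : uᵀx ≥ 0 for all x ∈ K}`. -/
def dualCone' {n : ℕ} (K : Set (Fin n → ℝ)) : Set (Fin n → ℝ) :=
  {u | ∀ x ∈ K, 0 ≤ u ⬝ᵥ x}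

lemma cone_sep_aux {E : Type*} [NormedAddCommGroup E] [NormedSpace ℝ E] (S : Set E)
    (hc : IsClosed S) (hv : Convex ℝ S) (hs : ∀ x ∈ S, ∀ t : ℝ, 0 ≤ t → t • x ∈ S)
    (hne : S.Nonempty) (y : E) (hy : y ∉ S) :
    ∃ f : E →L[ℝ] ℝ, (∀ x ∈ S, 0 ≤ f x) ∧ f y < 0 := by
  obtain ⟨f, s, h1, h2⟩ := geometric_hahn_banach_point_closed hv hc hy
  obtain ⟨z, hz⟩ := hne
  have h0 : s < 0 := by simpa using h2 _ (hs z hz 0 le_rfl)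
  refine ⟨f, fun x hx => ?_, h1.trans h0⟩
  by_contra hneg
  push Not at hneg
  have h3 := h2 _ (hs x hx (s / f x) (div_nonneg_of_nonpos h0.le hneg.le))
  rw [map_smul, smul_eq_mul, div_mul_cancel₀ _ hneg.ne] at h3
  exact lt_irrefl _ h3

lemma clm_dot_aux {k : ℕ} (f : (Fin k → ℝ) →ₗ[ℝ] ℝ) :
    ∃ u : Fin k → ℝ, ∀ x, f x = u ⬝ᵥ x := by
  refine ⟨fun i => f (Pi.single i 1), fun x => ?_⟩
  rw [LinearMap.pi_apply_eq_sum_univ f x]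
  simp only [dotProduct, smul_eq_mul]
  refine Finset.sum_congr rfl fun i _ => ?_
  rw [mul_comm]
  congr 2
  ext j
  simp [Pi.single_apply, eq_comm]

/-- If `C = {x : Ax − b ∈ K}` is nonempty, then the set of valid inequalities
for `C` equals the closure of the set of Farkas-aggregated pairs. -/
theorem cut_stmt_2 {m n : ℕ} (A : Matrix (Fin m) (Fin n) ℝ) (b : Fin m → ℝ)
    (K : Set (Fin m → ℝ)) (hK : IsProperCone K)
    (hA : LinearIndependent ℝ Aᵀ)
    (hC : {x : Fin n → ℝ | A.mulVec x - b ∈ K}.Nonempty) :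
    {p : (Fin n → ℝ) × ℝ | ∀ x : Fin n → ℝ, A.mulVec x - b ∈ K → p.2 ≤ p.1 ⬝ᵥ x} =
      closure {p : (Fin n → ℝ) × ℝ |
        ∃ u ∈ dualCone' K, p.1 = Aᵀ.mulVec u ∧ p.2 ≤ b ⬝ᵥ u} := by
  obtain ⟨hKc, hKv, hKs, -, hKi⟩ := hK
  have hKadd : ∀ x ∈ K, ∀ y ∈ K, x + y ∈ K := by
    intro x hx y hy
    have h := hKs _ (hKv hx hy (a := 1/2) (b := 1/2) (by norm_num) (by norm_num) (by norm_num))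
      2 (by norm_num)
    simpa [smul_add, smul_smul] using h
  obtain ⟨xb, hxb⟩ := hC
  have hxb : A.mulVec xb - b ∈ K := hxb
  set F : Set ((Fin n → ℝ) × ℝ) := {p : (Fin n → ℝ) × ℝ |
        ∃ u ∈ dualCone' K, p.1 = Aᵀ.mulVec u ∧ p.2 ≤ b ⬝ᵥ u} with hF
  apply Set.Subset.antisymm
  · intro p hp
    by_contra hpF
    have hFv : Convex ℝ F := by
      rintro ⟨a1, b1⟩ ⟨u, hu, hu1, hu2⟩ ⟨a2, b2⟩ ⟨v, hv, hv1, hv2⟩ r s hr hs _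
      refine ⟨r • u + s • v, fun x hx => ?_, ?_, ?_⟩
      · rw [add_dotProduct, smul_dotProduct, smul_dotProduct]
        exact add_nonneg (mul_nonneg hr (hu x hx)) (mul_nonneg hs (hv x hx))
      · simp only at hu1 hv1
        simp [hu1, hv1, mulVec_add, mulVec_smul]
      · simp only at hu2 hv2
        simp only [Prod.smul_mk, Prod.mk_add_mk, smul_eq_mul, dotProduct_add, dotProduct_smul]
        exact add_le_add (mul_le_mul_of_nonneg_left hu2 hr) (mul_le_mul_of_nonneg_left hv2 hs)
    have hFs : ∀ x ∈ F, ∀ t : ℝ, 0 ≤ t → t • x ∈ F := by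
      rintro ⟨a1, b1⟩ ⟨u, hu, hu1, hu2⟩ t ht
      refine ⟨t • u, fun x hx => ?_, ?_, ?_⟩
      · rw [smul_dotProduct]
        exact mul_nonneg ht (hu x hx)
      · simp only at hu1
        simp [hu1, mulVec_smul]
      · simp only at hu2
        simp only [Prod.smul_mk, smul_eq_mul, dotProduct_smul]
        exact mul_le_mul_of_nonneg_left hu2 ht
    have hFs' : ∀ x ∈ closure F, ∀ t : ℝ, 0 ≤ t → t • x ∈ closure F := by
      intro x hx t ht
      exact map_mem_closure (continuous_const_smul t) hx (fun y hy => hFs y hy t ht)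
    have hF0 : ((0 : Fin n → ℝ), (-1 : ℝ)) ∈ F :=
      ⟨0, fun x _ => by simp, by simp, by simp⟩
    obtain ⟨f, hf1, hf2⟩ := cone_sep_aux (closure F) isClosed_closure hFv.closure hFs'
      ⟨_, subset_closure hF0⟩ p hpF
    obtain ⟨x0, hx0⟩ := clm_dot_aux (f.toLinearMap ∘ₗ LinearMap.inl ℝ (Fin n → ℝ) ℝ)
    obtain ⟨t, ht⟩ : ∃ t : ℝ, t = - f (0, 1) := ⟨_, rfl⟩
    have hf : ∀ a c, f (a, c) = x0 ⬝ᵥ a - t * c := by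
      intro a c
      have h1 : ((a, c) : (Fin n → ℝ) × ℝ) = (a, 0) + c • (0, 1) := by simp
      have h2 : f (a, 0) = x0 ⬝ᵥ a := by simpa using hx0 a
      rw [h1, map_add, map_smul, h2, ht, smul_eq_mul]
      ring
    have ht0 : 0 ≤ t := by
      have := hf1 _ (subset_closure hF0)
      rw [hf] at this
      simpa using this
    have hmem : A.mulVec x0 - t • b ∈ K := by
      by_contra hn
      obtain ⟨g, hg1, hg2⟩ := cone_sep_aux K hKc hKv hKs ⟨_, hxb⟩ _ hn
      obtain ⟨u, hu⟩ := clm_dot_aux g.toLinearMap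
      have hu : ∀ x, g x = u ⬝ᵥ x := hu
      have hFu : (Aᵀ.mulVec u, b ⬝ᵥ u) ∈ F :=
        ⟨u, fun x hx => by rw [← hu]; exact hg1 x hx, rfl, le_rfl⟩
      have h1 := hf1 _ (subset_closure hFu)
      rw [hf, mulVec_transpose, dotProduct_comm, ← dotProduct_mulVec, dotProduct_comm b u] at h1
      rw [hu, dotProduct_sub, dotProduct_smul, smul_eq_mul] at hg2
      linarith
    obtain ⟨a, c⟩ := p
    rw [hf] at hf2
    have hp : ∀ x : Fin n → ℝ, A.mulVec x - b ∈ K → c ≤ a ⬝ᵥ x := hp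
    have key : ∀ l : ℝ, 0 ≤ l → c - a ⬝ᵥ xb ≤ l * (x0 ⬝ᵥ a - t * c) := by
      intro l hl
      have hd : 0 < 1 + l * t := by positivity
      have h1 := hp ((1 + l * t)⁻¹ • (xb + l • x0)) (by
        have h2 := hKs _ (hKadd _ hxb _ (hKs _ hmem l hl)) (1 + l * t)⁻¹ (by positivity)
        convert h2 using 1
        rw [mulVec_smul, mulVec_add, mulVec_smul]
        ext i
        simp only [Pi.sub_apply, Pi.smul_apply, Pi.add_apply, smul_eq_mul]
        field_simp
        ring)
      rw [dotProduct_smul, dotProduct_add, dotProduct_smul, smul_eq_mul, smul_eq_mul,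
        inv_mul_eq_div, le_div_iff₀ hd, dotProduct_comm a x0] at h1
      linarith
    have hk0 := key 0 le_rfl
    rw [zero_mul] at hk0
    have hk := key ((c - a ⬝ᵥ xb - 1) / (x0 ⬝ᵥ a - t * c))
      (div_nonneg_of_nonpos (by linarith) hf2.le)
    rw [div_mul_cancel₀ _ hf2.ne] at hk
    linarith
  · apply closure_minimal
    · rintro ⟨a, c⟩ ⟨u, hu, h1, h2⟩ x hx
      simp only at h1 h2 ⊢
      have h3 := hu _ hx
      rw [dotProduct_sub, dotProduct_comm u b] at h3
      rw [h1, mulVec_transpose, ← dotProduct_mulVec]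
      linarith
    · simp only [Set.setOf_forall]
      refine isClosed_iInter fun x => isClosed_iInter fun _ => ?_
      refine isClosed_le continuous_snd ?_
      simp only [dotProduct]
      fun_prop
end

section
/- Let C = {x ∈ ℝⁿ : Ax − b ∈ K}, where A ∈ ℝ^{m×n} has full column rank and K ⊆ ℝ^m is a proper cone, and let F = {(α, β) ∈ ℝⁿ × ℝ : ∃ u ∈ K* with α = Aᵀu and β ≤ bᵀu}. If the system Ax ⪰_K b is strongly feasible, i.e., there exists x₀ ∈ ℝⁿ with Ax₀ − b ∈ int K, then F = C°: a pair (α, β) is a valid inequality for C if and only if it is obtained by Farkas aggregation with a finite multiplier u ∈ K*. -/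
open Matrix

theorem lin_bdd_aux (a c : ℝ) (h : ∀ N : ℝ, 0 < N → N * a < c) : a ≤ 0 := by
  by_contra ha
  push Not at ha
  have h1 := h ((|c| + 1) / a) (by positivity)
  rw [div_mul_cancel₀ _ ha.ne'] at h1
  linarith [le_abs_self c]

/-- If the system `Ax − b ∈ K` is strongly feasible, then the set of
Farkas-aggregated pairs equals the set of valid inequalities for `C`. -/
theorem cut_stmt_3 {m n : ℕ} (A : Matrix (Fin m) (Fin n) ℝ) (b : Fin m → ℝ)
    (K : Set (Fin m → ℝ)) (hK : IsProperCone K)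
    (hA : LinearIndependent ℝ Aᵀ)
    (hstrong : ∃ x₀ : Fin n → ℝ, A.mulVec x₀ - b ∈ interior K) :
    {p : (Fin n → ℝ) × ℝ | ∃ u ∈ dualCone' K, p.1 = Aᵀ.mulVec u ∧ p.2 ≤ b ⬝ᵥ u} =
      {p : (Fin n → ℝ) × ℝ | ∀ x : Fin n → ℝ, A.mulVec x - b ∈ K → p.2 ≤ p.1 ⬝ᵥ x} := by
  obtain ⟨_, hconv, hscale, hpt, _⟩ := hK
  obtain ⟨x₀, hx₀⟩ := hstrong
  have hdot : ∀ (u : Fin m → ℝ) (x : Fin n → ℝ), (Aᵀ.mulVec u) ⬝ᵥ x = u ⬝ᵥ A.mulVec x := by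
    intro u x
    rw [Matrix.mulVec_transpose, Matrix.dotProduct_mulVec]
  ext ⟨α, β⟩
  simp only [Set.mem_setOf_eq]
  constructor
  · rintro ⟨u, hu, rfl, hβ⟩ x hx
    have h := hu _ hx
    rw [dotProduct_sub] at h
    rw [hdot]
    rw [dotProduct_comm b u] at hβ
    linarith
  intro hval
  have h0K : (0 : Fin m → ℝ) ∈ K := by
    have := hscale _ (interior_subset hx₀) 0 le_rfl
    simpa using this
  set z := A.mulVec x₀ - b with hz
  let T : Set ((Fin m → ℝ) × ℝ) := {p | ∃ x : Fin n → ℝ, p = (A.mulVec x - b, β - α ⬝ᵥ x)}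
  have hT : Convex ℝ T := by
    rintro _ ⟨x, rfl⟩ _ ⟨y, rfl⟩ s t hs ht hst
    refine ⟨s • x + t • y, ?_⟩
    have hs' : s = 1 - t := by linarith
    subst hs'
    ext i
    · simp [Matrix.mulVec_add, Matrix.mulVec_smul]; ring
    · simp [dotProduct_add, dotProduct_smul]; ring
  have hdisj : Disjoint (interior K ×ˢ Set.Ioi (0 : ℝ)) T := by
    rw [Set.disjoint_left]
    rintro _ ⟨h1, h2⟩ ⟨x, rfl⟩
    have := hval x (interior_subset h1)
    simp only [Set.mem_Ioi] at h2
    linarith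
  obtain ⟨f, c, hfS, hfT⟩ := geometric_hahn_banach_open
    (hconv.interior.prod (convex_Ioi (0 : ℝ))) (isOpen_interior.prod isOpen_Ioi) hT hdisj
  obtain ⟨v, t, hf⟩ : ∃ (v : Fin m → ℝ) (t : ℝ), ∀ y s, f (y, s) = v ⬝ᵥ y + t * s := by
    refine ⟨fun i => f (Pi.single i 1, 0), f (0, 1), fun y s => ?_⟩
    have e : ((y, s) : (Fin m → ℝ) × ℝ) = (y, 0) + s • (0, 1) := by ext <;> simp
    rw [e, map_add, map_smul, smul_eq_mul, mul_comm s]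
    congr 1
    have := LinearMap.pi_apply_eq_sum_univ
      ((f : ((Fin m → ℝ) × ℝ) →ₗ[ℝ] ℝ).comp (LinearMap.inl ℝ (Fin m → ℝ) ℝ)) y
    simp only [LinearMap.comp_apply, LinearMap.inl_apply, smul_eq_mul] at this
    refine this.trans ?_
    refine Finset.sum_congr rfl fun i _ => ?_
    have hs : (fun j => if i = j then (1 : ℝ) else 0) = Pi.single i 1 := by
      ext j
      simp [Pi.single_apply, eq_comm]
    rw [mul_comm, hs]
    rfl
  have hS : ∀ y ∈ interior K, ∀ s : ℝ, 0 < s → v ⬝ᵥ y + t * s < c := by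
    intro y hy s hs
    rw [← hf]
    exact hfS _ ⟨hy, hs⟩
  have hT' : ∀ x : Fin n → ℝ, c ≤ v ⬝ᵥ (A.mulVec x - b) + t * (β - α ⬝ᵥ x) := by
    intro x
    rw [← hf]
    exact hfT _ ⟨x, rfl⟩
  have hcombo : ∀ y ∈ K, ∀ ε : ℝ, 0 < ε → ε ≤ 1 → (1 - ε) • y + ε • z ∈ interior K := by
    intro y hy ε h1 h2
    exact hconv.combo_self_interior_mem_interior hy hx₀ (by linarith) h1 (by ring)
  have ht : t ≤ 0 := by
    refine lin_bdd_aux t (c - v ⬝ᵥ z) fun N hN => ?_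
    have := hS z hx₀ N hN
    linarith
  have hv : ∀ y ∈ K, v ⬝ᵥ y ≤ 0 := by
    intro y hy
    refine lin_bdd_aux _ (2 * c - v ⬝ᵥ z - 2 * t) fun N hN => ?_
    have := hS _ (hcombo _ (hscale y hy N hN.le) (1/2) (by norm_num) (by norm_num)) 1 one_pos
    simp only [dotProduct_add, dotProduct_smul, smul_eq_mul] at this
    linarith
  have hc : 0 ≤ c := by
    by_contra hc
    push Not at hc
    have hD : 0 < 1 + |v ⬝ᵥ z + t| + |c| := by positivity
    have hε : 0 < -c / (1 + |v ⬝ᵥ z + t| + |c|) := div_pos (by linarith) hD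
    have hε1 : -c / (1 + |v ⬝ᵥ z + t| + |c|) ≤ 1 := by
      rw [div_le_one hD]
      linarith [neg_le_abs c, abs_nonneg (v ⬝ᵥ z + t)]
    have hεD := div_mul_cancel₀ (-c) hD.ne'
    set ε := -c / (1 + |v ⬝ᵥ z + t| + |c|)
    have := hS _ (hcombo 0 h0K ε hε hε1) ε hε
    simp only [smul_zero, zero_add, dotProduct_smul, smul_eq_mul] at this
    nlinarith [neg_le_abs (v ⬝ᵥ z + t), abs_nonneg c]
  have ht0 : t < 0 := by
    refine lt_of_le_of_ne ht fun h => ?_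
    have h1 := hS z hx₀ 1 one_pos
    have h2 := hT' x₀
    rw [← hz, h] at h2
    rw [h] at h1
    linarith
  have key : ∀ x : Fin n → ℝ, 0 ≤ (Aᵀ.mulVec v - t • α) ⬝ᵥ x + (t * β - v ⬝ᵥ b) := by
    intro x
    have := hT' x
    rw [dotProduct_sub] at this
    rw [sub_dotProduct, smul_dotProduct, hdot, smul_eq_mul]
    linarith
  have hw : Aᵀ.mulVec v - t • α = 0 := by
    set w := Aᵀ.mulVec v - t • α
    have : w ⬝ᵥ w ≤ 0 := by
      refine lin_bdd_aux _ (t * β - v ⬝ᵥ b + 1) fun N hN => ?_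
      have := key (-(N • w))
      rw [dotProduct_neg, dotProduct_smul, smul_eq_mul] at this
      linarith
    have h2 : 0 ≤ w ⬝ᵥ w := Finset.sum_nonneg fun i _ => mul_self_nonneg _
    exact dotProduct_self_eq_zero.1 (le_antisymm this h2)
  refine ⟨t⁻¹ • v, ?_, ?_, ?_⟩
  · intro y hy
    rw [smul_dotProduct, smul_eq_mul]
    exact mul_nonneg_of_nonpos_of_nonpos (inv_nonpos.2 ht) (hv y hy)
  · rw [Matrix.mulVec_smul, sub_eq_zero.1 hw, smul_smul, inv_mul_cancel₀ ht0.ne, one_smul]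
  · have := key 0
    rw [dotProduct_zero, zero_add] at this
    rw [dotProduct_smul, smul_eq_mul, dotProduct_comm b v, inv_mul_eq_div, le_div_iff_of_neg ht0]
    linarith
end

section
/- Let D = ∪_{h=1}^H D_h where D_h = {x ∈ ℝⁿ : D_h x − d_h ∈ Q_h}, with D_h ∈ ℝ^{m_h×n}, d_h ∈ ℝ^{m_h} and Q_h ⊆ ℝ^{m_h} a proper cone, and let S = {x ∈ ℝⁿ : ∃ y_1,…,y_H ∈ ℝⁿ, z_1,…,z_H ∈ ℝ with Σ_h y_h = x, Σ_h z_h = 1, z_h ≥ 0 for all h, and D_h y_h − z_h d_h ∈ Q_h for all h}. If D_h ≠ ∅ for every h, then S ⊆ cl conv(D), the closed convex hull of D. -/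
open Matrix

/-- If each disjunctive term is nonempty, the extended-formulation set `S`
is contained in the closed convex hull of the disjunctive set `D`. -/
theorem cut_stmt_5 {n H : ℕ} (m : Fin H → ℕ)
    (D : ∀ h : Fin H, Matrix (Fin (m h)) (Fin n) ℝ) (d : ∀ h : Fin H, Fin (m h) → ℝ)
    (Q : ∀ h : Fin H, Set (Fin (m h) → ℝ)) (hQ : ∀ h, IsProperCone (Q h))
    (hne : ∀ h : Fin H, {x : Fin n → ℝ | (D h).mulVec x - d h ∈ Q h}.Nonempty) :
    {x : Fin n → ℝ | ∃ (y : Fin H → Fin n → ℝ) (z : Fin H → ℝ),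
        (∑ h, y h) = x ∧ (∑ h, z h) = 1 ∧ (∀ h, 0 ≤ z h) ∧
        ∀ h, (D h).mulVec (y h) - z h • d h ∈ Q h} ⊆
      closure (convexHull ℝ
        (⋃ h : Fin H, {x : Fin n → ℝ | (D h).mulVec x - d h ∈ Q h})) := by
  rintro x ⟨y, z, hx, hz1, hz0, hy⟩
  choose p hp using hne
  simp only [Set.mem_ofPred_eq] at hp
  have hadd : ∀ h, ∀ a ∈ Q h, ∀ b ∈ Q h, a + b ∈ Q h := by
    intro h a ha b hb
    obtain ⟨-, hc, hs, -, -⟩ := hQ h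
    have h1 := hc (hs a ha 2 (by norm_num)) (hs b hb 2 (by norm_num))
      (show (0 : ℝ) ≤ 1 / 2 by norm_num) (show (0 : ℝ) ≤ 1 / 2 by norm_num) (by norm_num)
    simpa [smul_smul] using h1
  let f : ℝ → (Fin n → ℝ) := fun e => (1 + H * e)⁻¹ • ∑ h, (y h + e • p h)
  have hf0 : f 0 = x := by simp [f, hx]
  have hfc : ContinuousAt f 0 := by
    have hc : ContinuousAt (fun e : ℝ => (1 + (H : ℝ) * e)⁻¹) 0 :=
      ContinuousAt.inv₀ (Continuous.continuousAt (by fun_prop)) (by simp)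
    refine ContinuousAt.smul hc ?_
    exact Continuous.continuousAt (by fun_prop)
  have ht : Filter.Tendsto f (nhdsWithin 0 (Set.Ioi 0)) (nhds x) := by
    rw [← hf0]
    exact hfc.tendsto.mono_left nhdsWithin_le_nhds
  refine mem_closure_of_tendsto ht ?_
  filter_upwards [self_mem_nhdsWithin] with e he
  have he : 0 < e := he
  have hpos : (0 : ℝ) < 1 + H * e := by positivity
  have hze : ∀ h, 0 < z h + e := fun h => by linarith [hz0 h]
  have hfe : f e = ∑ h, ((1 + H * e)⁻¹ * (z h + e)) • ((z h + e)⁻¹ • (y h + e • p h)) := by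
    simp only [f, Finset.smul_sum]
    refine Finset.sum_congr rfl fun h _ => ?_
    rw [smul_smul, mul_assoc, mul_inv_cancel₀ (hze h).ne', mul_one]
  rw [hfe]
  refine (convex_convexHull ℝ _).sum_mem (fun h _ => ?_) ?_ (fun h _ => ?_)
  · exact mul_nonneg (inv_nonneg.2 hpos.le) (hze h).le
  · rw [← Finset.mul_sum, Finset.sum_add_distrib, hz1]
    simp [hpos.ne']
  · refine subset_convexHull ℝ _ (Set.mem_iUnion.2 ⟨h, ?_⟩)
    have hs := (hQ h).2.2.1
    have h1 := hs _ (hadd h _ (hy h) _ (hs _ (hp h) e he.le)) (z h + e)⁻¹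
      (inv_nonneg.2 (hze h).le)
    have h2 : (z h + e)⁻¹ • ((D h).mulVec (y h) - z h • d h + e • ((D h).mulVec (p h) - d h))
        = (D h).mulVec ((z h + e)⁻¹ • (y h + e • p h)) - d h := by
      rw [Matrix.mulVec_smul, Matrix.mulVec_add, Matrix.mulVec_smul]
      ext i
      have := (hze h).ne'
      simp only [Pi.smul_apply, Pi.add_apply, Pi.sub_apply, smul_eq_mul]
      field_simp
      ring
    rw [h2] at h1
    exact h1
end

section
/- Let D = ∪_{h=1}^H D_h where D_h = {x ∈ ℝⁿ : D_h x − d_h ∈ Q_h}, with D_h ∈ ℝ^{m_h×n}, d_h ∈ ℝ^{m_h}, and Q_h ⊆ ℝ^{m_h} a proper cone. For each h let F_h = {(α, β) ∈ ℝⁿ × ℝ : ∃ u_h ∈ Q_h* with α = D_hᵀu_h and β ≤ d_hᵀu_h}, and let F = ∩_{h=1}^H F_h. Then: (i) F ⊆ D°; (ii) if D_h ≠ ∅ for every h, then D° = ∩_{h=1}^H cl F_h; (iii) if for every h there exists x_h with D_h x_h − d_h ∈ int Q_h and every D_h has full column rank, then F = D°. -/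
open Matrix

/-- Pairs `(α, β)` obtained by Farkas aggregation from `D_h x − d_h ∈ Q_h`. -/
def farkasPairs {n mh : ℕ} (Dh : Matrix (Fin mh) (Fin n) ℝ) (dh : Fin mh → ℝ)
    (Qh : Set (Fin mh → ℝ)) : Set ((Fin n → ℝ) × ℝ) :=
  {p | ∃ u ∈ dualCone' Qh, p.1 = Dhᵀ.mulVec u ∧ p.2 ≤ dh ⬝ᵥ u}

/-- The set `X°` of valid inequalities for `X`. -/
def validIneqs {n : ℕ} (X : Set (Fin n → ℝ)) : Set ((Fin n → ℝ) × ℝ) :=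
  {p | ∀ x ∈ X, p.2 ≤ p.1 ⬝ᵥ x}

theorem cone_sep {E : Type*} [NormedAddCommGroup E] [NormedSpace ℝ E] {C : Set E}
    (hc : IsClosed C) (hv : Convex ℝ C) (h0 : (0 : E) ∈ C)
    (hs : ∀ x ∈ C, ∀ t : ℝ, 0 ≤ t → t • x ∈ C) {x : E} (hx : x ∉ C) :
    ∃ f : E →L[ℝ] ℝ, f x < 0 ∧ ∀ y ∈ C, 0 ≤ f y := by
  obtain ⟨f, u, h1, h2⟩ := geometric_hahn_banach_point_closed hv hc hx
  have hu : u < 0 := by simpa using h2 0 h0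
  refine ⟨f, h1.trans hu, fun y hy => ?_⟩
  by_contra hlt
  push Not at hlt
  have h3 := h2 _ (hs y hy (u / f y) (div_nonneg_of_nonpos hu.le hlt.le))
  rw [map_smul, smul_eq_mul, div_mul_cancel₀ _ hlt.ne] at h3
  exact lt_irrefl _ h3

theorem dot_rep {n : ℕ} (f : (Fin n → ℝ) →L[ℝ] ℝ) :
    ∃ y : Fin n → ℝ, ∀ x, f x = x ⬝ᵥ y := by
  refine ⟨fun i => f (fun j => if i = j then 1 else 0), fun x => ?_⟩
  have := LinearMap.pi_apply_eq_sum_univ (f : (Fin n → ℝ) →ₗ[ℝ] ℝ) x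
  simpa [dotProduct] using this

theorem proper_zero {n : ℕ} {K : Set (Fin n → ℝ)} (hK : IsProperCone K) : (0 : Fin n → ℝ) ∈ K := by
  have : (0 : Fin n → ℝ) ∈ K ∩ (-K) := by rw [hK.2.2.2.1]; rfl
  exact this.1

theorem proper_add {n : ℕ} {K : Set (Fin n → ℝ)} (hK : IsProperCone K) {x y : Fin n → ℝ}
    (hx : x ∈ K) (hy : y ∈ K) : x + y ∈ K := by
  have hv : Convex ℝ K := hK.2.1
  have h := hv hx hy (by norm_num : (0 : ℝ) ≤ 1 / 2) (by norm_num : (0 : ℝ) ≤ 1 / 2) (by norm_num)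
  have h2 := hK.2.2.1 _ h 2 (by norm_num)
  convert h2 using 1
  ext i
  simp
  ring

theorem bidual {n : ℕ} {K : Set (Fin n → ℝ)} (hK : IsProperCone K) {x : Fin n → ℝ}
    (hx : ∀ u ∈ dualCone' K, 0 ≤ u ⬝ᵥ x) : x ∈ K := by
  by_contra hn
  obtain ⟨f, h1, h2⟩ := cone_sep hK.1 hK.2.1 (proper_zero hK) hK.2.2.1 hn
  obtain ⟨y, hy⟩ := dot_rep f
  have := hx y (fun z hz => by rw [dotProduct_comm, ← hy]; exact h2 z hz)
  rw [dotProduct_comm, ← hy] at this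
  linarith

theorem tr_dot {n m : ℕ} (A : Matrix (Fin m) (Fin n) ℝ) (u : Fin m → ℝ) (x : Fin n → ℝ) :
    Aᵀ.mulVec u ⬝ᵥ x = u ⬝ᵥ A.mulVec x := by
  rw [mulVec_transpose, dotProduct_mulVec]

theorem fp_sub {n m : ℕ} (A : Matrix (Fin m) (Fin n) ℝ) (b : Fin m → ℝ)
    (K : Set (Fin m → ℝ)) :
    farkasPairs A b K ⊆ validIneqs {x | A.mulVec x - b ∈ K} := by
  rintro ⟨a, β⟩ ⟨u, hu, h1, h2⟩ x hx
  have := hu _ hx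
  simp only at h1 h2 ⊢
  rw [h1, tr_dot]
  rw [dotProduct_sub, dotProduct_comm u b] at this
  linarith

theorem valid_closed {n : ℕ} (X : Set (Fin n → ℝ)) : IsClosed (validIneqs X) := by
  have : validIneqs X = ⋂ x ∈ X, {p : (Fin n → ℝ) × ℝ | p.2 ≤ p.1 ⬝ᵥ x} := by
    ext p; simp [validIneqs]
  rw [this]
  refine isClosed_biInter fun x _ => isClosed_le continuous_snd ?_
  unfold dotProduct
  fun_prop

theorem fp_convex {n m : ℕ} (A : Matrix (Fin m) (Fin n) ℝ) (b : Fin m → ℝ)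
    (K : Set (Fin m → ℝ)) : Convex ℝ (farkasPairs A b K) := by
  rintro p ⟨u, hu, h1, h2⟩ q ⟨v, hv, h3, h4⟩ s t hs ht _
  refine ⟨s • u + t • v, fun x hx => ?_, ?_, ?_⟩
  · have := hu x hx
    have := hv x hx
    simp only [add_dotProduct, smul_dotProduct, smul_eq_mul]
    positivity
  · simp [mulVec_add, mulVec_smul, h1, h3]
  · simp only [dotProduct_add, dotProduct_smul, smul_eq_mul, Prod.snd_add, Prod.smul_snd]
    gcongr

theorem fp_smul {n m : ℕ} (A : Matrix (Fin m) (Fin n) ℝ) (b : Fin m → ℝ)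
    (K : Set (Fin m → ℝ)) : ∀ p ∈ farkasPairs A b K, ∀ t : ℝ, 0 ≤ t →
      t • p ∈ farkasPairs A b K := by
  rintro p ⟨u, hu, h1, h2⟩ t ht
  refine ⟨t • u, fun x hx => ?_, ?_, ?_⟩
  · have := hu x hx
    simp only [smul_dotProduct, smul_eq_mul]
    positivity
  · simp [mulVec_smul, h1]
  · simp only [dotProduct_smul, smul_eq_mul, Prod.smul_snd]
    gcongr

theorem valid_sub {n m : ℕ} (A : Matrix (Fin m) (Fin n) ℝ) (b : Fin m → ℝ)
    {K : Set (Fin m → ℝ)} (hK : IsProperCone K) (hne : {x | A.mulVec x - b ∈ K}.Nonempty) :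
    validIneqs {x | A.mulVec x - b ∈ K} ⊆ closure (farkasPairs A b K) := by
  rintro ⟨a, β⟩ hp
  by_contra hn
  have hz : ∀ r : ℝ, r ≤ 0 → ((0 : Fin n → ℝ), r) ∈ farkasPairs A b K := fun r hr =>
    ⟨0, fun x _ => by simp, by simp, by simpa using hr⟩
  obtain ⟨f, hf1, hf2⟩ := cone_sep isClosed_closure (fp_convex A b K).closure
    (subset_closure (hz 0 le_rfl)) (fun x hx t ht =>
      map_mem_closure (continuous_const_smul t) hx (fun p hp => fp_smul A b K p hp t ht)) hn
  obtain ⟨y, hy⟩ := dot_rep (f.comp (ContinuousLinearMap.inl ℝ (Fin n → ℝ) ℝ))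
  have hf : ∀ c r, f (c, r) = c ⬝ᵥ y + r * f (0, 1) := by
    intro c r
    have : (c, r) = ((c, 0) : (Fin n → ℝ) × ℝ) + r • (0, 1) := by simp
    rw [this, map_add, map_smul, ← hy]
    simp
  obtain ⟨τ, hτ⟩ : ∃ τ, τ = - f (0, 1) := ⟨_, rfl⟩
  have hf' : ∀ c r, f (c, r) = c ⬝ᵥ y - r * τ := by
    intro c r; rw [hf, hτ]; ring
  have hτ0 : 0 ≤ τ := by
    have := hf2 _ (subset_closure (hz (-1) (by norm_num)))
    rw [hf'] at this
    simpa using this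
  have hmem : A.mulVec y - τ • b ∈ K := by
    refine bidual hK fun u hu => ?_
    have := hf2 (Aᵀ.mulVec u, b ⬝ᵥ u) (subset_closure ⟨u, hu, rfl, le_rfl⟩)
    rw [hf', tr_dot] at this
    rw [dotProduct_sub, dotProduct_smul, smul_eq_mul, dotProduct_comm u b]
    linarith
  rw [hf'] at hf1
  rcases hτ0.eq_or_lt with h | h
  · obtain ⟨x0, hx0⟩ := hne
    rw [← h] at hmem hf1
    simp only [zero_smul, sub_zero, mul_zero] at hmem hf1
    have key : ∀ l : ℝ, 0 ≤ l → β ≤ a ⬝ᵥ x0 + l * (a ⬝ᵥ y) := by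
      intro l hl
      have := hp (x0 + l • y) (by
        have := proper_add hK hx0 (hK.2.2.1 _ hmem l hl)
        simp only [Set.mem_ofPred_eq, mulVec_add, mulVec_smul]
        convert this using 1
        abel)
      simpa [dotProduct_add, dotProduct_smul] using this
    have h0 := key 0 le_rfl
    have h1 := key ((β - a ⬝ᵥ x0 - 1) / (a ⬝ᵥ y))
      (div_nonneg_of_nonpos (by linarith) hf1.le)
    rw [div_mul_cancel₀ _ hf1.ne] at h1
    linarith
  · have := hp (τ⁻¹ • y) (by
      have := hK.2.2.1 _ hmem τ⁻¹ (by positivity)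
      rwa [smul_sub, smul_smul, inv_mul_cancel₀ h.ne', one_smul, ← mulVec_smul] at this)
    simp only [dotProduct_smul, smul_eq_mul] at this
    have h2 := mul_le_mul_of_nonneg_right this h.le
    rw [mul_comm τ⁻¹, mul_assoc, inv_mul_cancel₀ h.ne'] at h2
    linarith

theorem dual_bound {m : ℕ} {K : Set (Fin m → ℝ)} {s : Fin m → ℝ} (hs : s ∈ interior K) :
    ∃ ε > 0, ∀ u ∈ dualCone' K, ε * ‖u‖ ≤ u ⬝ᵥ s := by
  obtain ⟨ε, hε, hb⟩ := Metric.nhds_basis_closedBall.mem_iff.1 (mem_interior_iff_mem_nhds.1 hs)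
  refine ⟨ε, hε, fun u hu => ?_⟩
  have h0 : 0 ≤ u ⬝ᵥ s := hu s (interior_subset hs)
  rw [mul_comm, ← le_div_iff₀ hε, pi_norm_le_iff_of_nonneg (by positivity)]
  intro i
  rw [le_div_iff₀ hε, Real.norm_eq_abs]
  have key : ∀ r : ℝ, |r| = ε → 0 ≤ u ⬝ᵥ s + u i * r := by
    intro r hr
    have := hu (s + Pi.single i r) (hb (by
      rw [Metric.mem_closedBall, dist_eq_norm, add_sub_cancel_left,
        pi_norm_le_iff_of_nonneg hε.le]
      intro j
      by_cases hj : j = i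
      · subst hj; simp [hr]
      · simp [hj, hε.le]))
    simpa [dotProduct_add] using this
  have h1 := key ε (abs_of_pos hε)
  have h2 := key (-ε) (by rw [abs_neg, abs_of_pos hε])
  rcases abs_cases (u i) with ⟨h, _⟩ | ⟨h, _⟩ <;> rw [h] <;> linarith

theorem fp_closed {n m : ℕ} (A : Matrix (Fin m) (Fin n) ℝ) (b : Fin m → ℝ)
    {K : Set (Fin m → ℝ)} {x : Fin n → ℝ} (hx : A.mulVec x - b ∈ interior K) :
    IsClosed (farkasPairs A b K) := by
  obtain ⟨ε, hε, hb⟩ := dual_bound hx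
  refine IsSeqClosed.isClosed ?_
  intro p q hp hq
  choose u hu h1 h2 using hp
  have hc : Filter.Tendsto (fun k => (p k).1 ⬝ᵥ x - (p k).2) Filter.atTop
      (nhds (q.1 ⬝ᵥ x - q.2)) := by
    have : Continuous (fun p : (Fin n → ℝ) × ℝ => p.1 ⬝ᵥ x - p.2) := by
      unfold dotProduct
      fun_prop
    exact (this.tendsto q).comp hq
  obtain ⟨M, hM⟩ := hc.bddAbove_range
  have hbd : ∀ k, u k ∈ Metric.closedBall (0 : Fin m → ℝ) (M / ε) := by
    intro k
    rw [mem_closedBall_zero_iff, le_div_iff₀ hε, mul_comm]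
    refine (hb _ (hu k)).trans (le_trans ?_ (hM ⟨k, rfl⟩))
    simp only
    rw [h1 k, tr_dot, dotProduct_sub, dotProduct_comm (u k) b]
    linarith [h2 k]
  obtain ⟨v, -, φ, hφ, hv⟩ := tendsto_subseq_of_bounded Metric.isBounded_closedBall hbd |>.imp
    fun v h => h
  have hq' := hq.comp hφ.tendsto_atTop
  have hq1 := (continuous_fst.tendsto q).comp hq'
  have hq2 := (continuous_snd.tendsto q).comp hq'
  refine ⟨v, fun y hy => ?_, ?_, ?_⟩
  · have hcy : Continuous (fun w : Fin m → ℝ => w ⬝ᵥ y) := by unfold dotProduct; fun_prop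
    exact ge_of_tendsto' ((hcy.tendsto v).comp hv) (fun k => hu _ y hy)
  · have hcy : Continuous (fun w : Fin m → ℝ => Aᵀ.mulVec w) := by fun_prop
    refine tendsto_nhds_unique hq1 (((hcy.tendsto v).comp hv).congr fun k => ?_)
    exact (h1 _).symm
  · have hcy : Continuous (fun w : Fin m → ℝ => b ⬝ᵥ w) := by unfold dotProduct; fun_prop
    exact le_of_tendsto_of_tendsto' hq2 ((hcy.tendsto v).comp hv) (fun k => h2 _)

theorem valid_iUnion {n H : ℕ} (X : Fin H → Set (Fin n → ℝ)) :
    validIneqs (⋃ h, X h) = ⋂ h, validIneqs (X h) := by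
  ext p
  simp only [validIneqs, Set.mem_iUnion, Set.mem_iInter, Set.mem_ofPred_eq]
  exact ⟨fun h i x hx => h x ⟨i, hx⟩, fun h x ⟨i, hx⟩ => h i x hx⟩

/-- Disjunctive inequalities: (i) `F ⊆ D°`; (ii) if each term is nonempty then
`D° = ∩_h cl F_h`; (iii) if each term is strongly feasible and each `D_h` has
full column rank then `F = D°`. -/
theorem cut_stmt_6 {n H : ℕ} (m : Fin H → ℕ)
    (D : ∀ h : Fin H, Matrix (Fin (m h)) (Fin n) ℝ) (d : ∀ h : Fin H, Fin (m h) → ℝ)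
    (Q : ∀ h : Fin H, Set (Fin (m h) → ℝ)) (hQ : ∀ h, IsProperCone (Q h)) :
    ((⋂ h : Fin H, farkasPairs (D h) (d h) (Q h)) ⊆
        validIneqs (⋃ h : Fin H, {x : Fin n → ℝ | (D h).mulVec x - d h ∈ Q h})) ∧
    ((∀ h : Fin H, {x : Fin n → ℝ | (D h).mulVec x - d h ∈ Q h}.Nonempty) →
      validIneqs (⋃ h : Fin H, {x : Fin n → ℝ | (D h).mulVec x - d h ∈ Q h}) =
        ⋂ h : Fin H, closure (farkasPairs (D h) (d h) (Q h))) ∧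
    ((∀ h : Fin H, ∃ x : Fin n → ℝ, (D h).mulVec x - d h ∈ interior (Q h)) →
      (∀ h : Fin H, LinearIndependent ℝ (D h)ᵀ) →
      (⋂ h : Fin H, farkasPairs (D h) (d h) (Q h)) =
        validIneqs (⋃ h : Fin H, {x : Fin n → ℝ | (D h).mulVec x - d h ∈ Q h})) := by
  rw [valid_iUnion]
  refine ⟨Set.iInter_mono fun h => fp_sub _ _ _, fun hne => ?_, fun hs _ => ?_⟩
  · exact Set.iInter_congr fun h => Set.Subset.antisymm (valid_sub _ _ (hQ h) (hne h))
      (closure_minimal (fp_sub _ _ _) (valid_closed _))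
  · refine Set.iInter_congr fun h => Set.Subset.antisymm (fp_sub _ _ _) ?_
    obtain ⟨x, hx⟩ := hs h
    have := valid_sub (D h) (d h) (hQ h) ⟨x, (interior_subset hx : _ ∈ Q h)⟩
    rwa [(fp_closed _ _ hx).closure_eq] at this
end

section
/- Let A ∈ ℝ^{m×n}, b ∈ ℝ^m, K ⊆ ℝⁿ a proper cone, and for each h = 1,…,H let D_h ∈ ℝ^{m_h×n}, d_h ∈ ℝ^{m_h}, Q_h ⊆ ℝ^{m_h} a proper cone; let x̄ ∈ ℝⁿ satisfy Ax̄ = b and let C ⊆ {x : Ax = b}. Suppose (α, β, u, λ, v) is CGCP-feasible and let u₀ ∈ ℝ^m. Define (α̃, β̃, ũ, λ̃, ṽ) = (α − Aᵀu₀, β − bᵀu₀, (u_h − u₀)_h, λ, v). Then (α̃, β̃, ũ, λ̃, ṽ) is CGCP-feasible, α̃ᵀx̄ − β̃ = αᵀx̄ − β, and C ∩ {x : αᵀx ≥ β} = C ∩ {x : α̃ᵀx ≥ β̃}. -/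
open Matrix

/-- A tuple \`(α, β, u, λ, v)\` is CGCP-feasible if
\`α = Aᵀu_h + λ_h + D_hᵀv_h\` and \`β ≤ bᵀu_h + d_hᵀv_h\` with \`λ_h ∈ K*\`,
\`v_h ∈ Q_h*\`, for every \`h\`. -/
def CGCPFeasible {m n H : ℕ} (A : Matrix (Fin m) (Fin n) ℝ) (b : Fin m → ℝ)
    (K : Set (Fin n → ℝ)) (mq : Fin H → ℕ)
    (D : ∀ h : Fin H, Matrix (Fin (mq h)) (Fin n) ℝ) (d : ∀ h : Fin H, Fin (mq h) → ℝ)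
    (Q : ∀ h : Fin H, Set (Fin (mq h) → ℝ))
    (α : Fin n → ℝ) (β : ℝ) (u : Fin H → Fin m → ℝ)
    (lam : Fin H → Fin n → ℝ) (v : ∀ h : Fin H, Fin (mq h) → ℝ) : Prop :=
  ∀ h : Fin H, lam h ∈ dualCone' K ∧ v h ∈ dualCone' (Q h) ∧
    α = Aᵀ.mulVec (u h) + lam h + (D h)ᵀ.mulVec (v h) ∧
    β ≤ b ⬝ᵥ u h + d h ⬝ᵥ v h

/-- Translating a CGCP-feasible tuple by `u₀` preserves feasibility, the
objective value, and the portion of `C ⊆ {x : Ax = b}` cut off. -/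
theorem cut_stmt_8 {m n H : ℕ} (A : Matrix (Fin m) (Fin n) ℝ) (b : Fin m → ℝ)
    (K : Set (Fin n → ℝ)) (hK : IsProperCone K)
    (mq : Fin H → ℕ) (D : ∀ h : Fin H, Matrix (Fin (mq h)) (Fin n) ℝ)
    (d : ∀ h : Fin H, Fin (mq h) → ℝ) (Q : ∀ h : Fin H, Set (Fin (mq h) → ℝ))
    (hQ : ∀ h, IsProperCone (Q h))
    (xbar : Fin n → ℝ) (hxbar : A.mulVec xbar = b)
    (C : Set (Fin n → ℝ)) (hC : C ⊆ {x : Fin n → ℝ | A.mulVec x = b})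
    (α : Fin n → ℝ) (β : ℝ) (u : Fin H → Fin m → ℝ)
    (lam : Fin H → Fin n → ℝ) (v : ∀ h : Fin H, Fin (mq h) → ℝ)
    (hfeas : CGCPFeasible A b K mq D d Q α β u lam v)
    (u₀ : Fin m → ℝ) :
    CGCPFeasible A b K mq D d Q (α - Aᵀ.mulVec u₀) (β - b ⬝ᵥ u₀)
        (fun h => u h - u₀) lam v ∧
    (α - Aᵀ.mulVec u₀) ⬝ᵥ xbar - (β - b ⬝ᵥ u₀) = α ⬝ᵥ xbar - β ∧
    C ∩ {x : Fin n → ℝ | β ≤ α ⬝ᵥ x} =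
      C ∩ {x : Fin n → ℝ | β - b ⬝ᵥ u₀ ≤ (α - Aᵀ.mulVec u₀) ⬝ᵥ x} := by
  have key : ∀ x : Fin n → ℝ, A.mulVec x = b →
      (α - Aᵀ.mulVec u₀) ⬝ᵥ x = α ⬝ᵥ x - b ⬝ᵥ u₀ := by
    intro x hx
    rw [sub_dotProduct, Matrix.mulVec_transpose, ← Matrix.dotProduct_mulVec, hx,
      dotProduct_comm u₀ b]
  refine ⟨?_, ?_, ?_⟩
  · intro h
    obtain ⟨h1, h2, h3, h4⟩ := hfeas h
    refine ⟨h1, h2, ?_, ?_⟩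
    · rw [Matrix.mulVec_sub, h3]
      abel
    · rw [dotProduct_sub]
      linarith
  · rw [key xbar hxbar]
    ring
  · ext x
    simp only [Set.mem_inter_iff, Set.mem_setOf_eq]
    refine and_congr_right fun hx => ?_
    rw [key x (hC hx)]
    exact (sub_le_sub_iff_right _).symm
end

section
/- (Tightness under the α normalization.) Let ‖·‖ be a norm on ℝⁿ with dual norm ‖y‖_* = sup{yᵀx : ‖x‖ ≤ 1}. Suppose (α, β, u, λ, v) is CGCP-feasible with ‖α‖_* ≤ 1, and (x, y, z) is MCP-feasible, i.e., Σ_h y_h = x, Σ_h z_h = 1, A y_h = z_h b, D_h y_h − z_h d_h ∈ Q_h, y_h ∈ K, z_h ≥ 0 for all h. If the zero-duality-gap relation αᵀx̄ − β = −‖x̄ − x‖ holds, then αᵀx = β. -/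
open Matrix

theorem linear_bound_aux {V : Type} [AddCommGroup V] [Module ℝ V] [FiniteDimensional ℝ V]
    (N : V → ℝ) (hN0 : ∀ x, 0 ≤ N x) (hNeq : ∀ x, N x = 0 ↔ x = 0)
    (hNsmul : ∀ (a : ℝ) (x : V), N (a • x) = |a| * N x)
    (hNadd : ∀ x y : V, N (x + y) ≤ N x + N y) (f : V →ₗ[ℝ] ℝ) :
    ∃ C : ℝ, ∀ x, N x ≤ 1 → f x ≤ C := by
  letI : Norm V := ⟨N⟩
  have core : NormedSpace.Core ℝ V :=
    { norm_nonneg := hN0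
      norm_smul := fun a x => by
        rw [Real.norm_eq_abs]; exact hNsmul a x
      norm_triangle := hNadd
      norm_eq_zero_iff := hNeq }
  letI : NormedAddCommGroup V := NormedAddCommGroup.ofCore core
  letI : NormedSpace ℝ V := NormedSpace.ofCore core
  let g := LinearMap.toContinuousLinearMap f
  refine ⟨‖g‖, fun x hx => ?_⟩
  have h1 : ‖g x‖ ≤ ‖g‖ * ‖x‖ := g.le_opNorm x
  have h2 : ‖x‖ ≤ 1 := hx
  have h3 : f x ≤ ‖g x‖ := le_abs_self _
  nlinarith [norm_nonneg g]

/-- Tightness under the `α` normalization: a CGCP-feasible cut with dual norm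
of `α` at most 1 is tight at the MCP projection point `x` when there is no
duality gap. -/
theorem cut_stmt_9 {m n H : ℕ} (A : Matrix (Fin m) (Fin n) ℝ) (b : Fin m → ℝ)
    (K : Set (Fin n → ℝ)) (hK : IsProperCone K)
    (mq : Fin H → ℕ) (D : ∀ h : Fin H, Matrix (Fin (mq h)) (Fin n) ℝ)
    (d : ∀ h : Fin H, Fin (mq h) → ℝ) (Q : ∀ h : Fin H, Set (Fin (mq h) → ℝ))
    (hQ : ∀ h, IsProperCone (Q h))
    (xbar : Fin n → ℝ) (hxbar : A.mulVec xbar = b)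
    -- a norm N on ℝⁿ
    (N : (Fin n → ℝ) → ℝ)
    (hN0 : ∀ x, 0 ≤ N x) (hNeq : ∀ x, N x = 0 ↔ x = 0)
    (hNsmul : ∀ (a : ℝ) (x : Fin n → ℝ), N (a • x) = |a| * N x)
    (hNadd : ∀ x y : Fin n → ℝ, N (x + y) ≤ N x + N y)
    -- CGCP-feasible tuple with ‖α‖_* ≤ 1
    (α : Fin n → ℝ) (β : ℝ) (u : Fin H → Fin m → ℝ)
    (lam : Fin H → Fin n → ℝ) (v : ∀ h : Fin H, Fin (mq h) → ℝ)
    (hfeas : CGCPFeasible A b K mq D d Q α β u lam v)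
    (hα : sSup {t : ℝ | ∃ x : Fin n → ℝ, N x ≤ 1 ∧ t = α ⬝ᵥ x} ≤ 1)
    -- MCP-feasible point (x, y, z)
    (x : Fin n → ℝ) (y : Fin H → Fin n → ℝ) (z : Fin H → ℝ)
    (hy : (∑ h, y h) = x) (hz : (∑ h, z h) = 1)
    (hAy : ∀ h, A.mulVec (y h) = z h • b)
    (hDy : ∀ h, (D h).mulVec (y h) - z h • d h ∈ Q h)
    (hyK : ∀ h, y h ∈ K) (hz0 : ∀ h, 0 ≤ z h)
    -- zero duality gap
    (hgap : α ⬝ᵥ xbar - β = -(N (xbar - x))) :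
    α ⬝ᵥ x = β := by
  have hbdd : BddAbove {t : ℝ | ∃ x : Fin n → ℝ, N x ≤ 1 ∧ t = α ⬝ᵥ x} := by
    obtain ⟨C, hC⟩ := linear_bound_aux N hN0 hNeq hNsmul hNadd (dotProductBilin ℝ ℝ α)
    refine ⟨C, ?_⟩
    rintro t ⟨w, hw, rfl⟩
    exact hC w hw
  have hle : ∀ w, α ⬝ᵥ w ≤ N w := by
    intro w
    rcases (hN0 w).eq_or_lt with h0 | hpos
    · have : w = 0 := (hNeq w).1 h0.symm
      rw [← h0, this, dotProduct_zero]
    · have h1 : α ⬝ᵥ ((N w)⁻¹ • w) ≤ 1 := by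
        refine le_trans (le_csSup hbdd ⟨_, ?_, rfl⟩) hα
        rw [hNsmul, abs_of_pos (inv_pos.2 hpos), inv_mul_cancel₀ hpos.ne']
      rw [dotProduct_smul, smul_eq_mul, inv_mul_le_iff₀ hpos, mul_one] at h1
      exact h1
  have hsym : N (x - xbar) = N (xbar - x) := by
    have := hNsmul (-1) (xbar - x)
    simpa using this
  have hup := hle (x - xbar)
  rw [dotProduct_sub, hsym] at hup
  have hlow : ∀ h, z h * β ≤ α ⬝ᵥ y h := by
    intro h
    obtain ⟨hl, hv, hαe, hβ⟩ := hfeas h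
    have e1 := hl _ (hyK h)
    have e2 := hv _ (hDy h)
    have e3 := mul_le_mul_of_nonneg_left hβ (hz0 h)
    have e4 : α ⬝ᵥ y h = z h * (b ⬝ᵥ u h) + lam h ⬝ᵥ y h + v h ⬝ᵥ (D h).mulVec (y h) := by
      conv_lhs => rw [hαe]
      rw [add_dotProduct, add_dotProduct, mulVec_transpose, mulVec_transpose,
        ← dotProduct_mulVec, ← dotProduct_mulVec, hAy h, dotProduct_smul, smul_eq_mul,
        dotProduct_comm (u h) b]
    rw [dotProduct_sub, dotProduct_smul, smul_eq_mul, dotProduct_comm (v h) (d h)] at e2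
    linarith
  have hsum : β ≤ α ⬝ᵥ x := by
    rw [← hy, dotProduct_sum]
    calc β = ∑ h, z h * β := by rw [← Finset.sum_mul, hz, one_mul]
      _ ≤ _ := Finset.sum_le_sum fun h _ => hlow h
  linarith
end

section
/- (Supporting hyperplane under the polar normalization.) Let γ ∈ ℝⁿ. Suppose (α, β, u, λ, v) is optimal for the polar-normalized CGCP, i.e., it is CGCP-feasible, satisfies αᵀγ ≤ 1, and minimizes the objective α'ᵀx̄ − β' over all CGCP-feasible tuples (α', β', u', λ', v') with α'ᵀγ ≤ 1. Suppose (η, y, z) with η ≥ 0 is feasible for the polar MCP, i.e., Σ_h y_h = x̄ + ηγ, Σ_h z_h = 1, A y_h = z_h b, D_h y_h − z_h d_h ∈ Q_h, y_h ∈ K, z_h ≥ 0 for all h, and assume the zero-duality-gap relation αᵀx̄ − β = −η. Then αᵀ(x̄ + ηγ) = β. -/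
open Matrix

/-- Supporting hyperplane under the polar normalization: an optimal
polar-normalized CGCP solution is tight at `x̄ + ηγ` when there is no
duality gap. -/
theorem cut_stmt_10 {m n H : ℕ} (A : Matrix (Fin m) (Fin n) ℝ) (b : Fin m → ℝ)
    (K : Set (Fin n → ℝ)) (hK : IsProperCone K)
    (mq : Fin H → ℕ) (D : ∀ h : Fin H, Matrix (Fin (mq h)) (Fin n) ℝ)
    (d : ∀ h : Fin H, Fin (mq h) → ℝ) (Q : ∀ h : Fin H, Set (Fin (mq h) → ℝ))
    (hQ : ∀ h, IsProperCone (Q h))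
    (xbar : Fin n → ℝ) (hxbar : A.mulVec xbar = b)
    (γ : Fin n → ℝ)
    -- optimal solution of the polar-normalized CGCP
    (α : Fin n → ℝ) (β : ℝ) (u : Fin H → Fin m → ℝ)
    (lam : Fin H → Fin n → ℝ) (v : ∀ h : Fin H, Fin (mq h) → ℝ)
    (hfeas : CGCPFeasible A b K mq D d Q α β u lam v)
    (hnorm : α ⬝ᵥ γ ≤ 1)
    (hopt : ∀ (α' : Fin n → ℝ) (β' : ℝ) (u' : Fin H → Fin m → ℝ)
        (lam' : Fin H → Fin n → ℝ) (v' : ∀ h : Fin H, Fin (mq h) → ℝ),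
        CGCPFeasible A b K mq D d Q α' β' u' lam' v' → α' ⬝ᵥ γ ≤ 1 →
        α ⬝ᵥ xbar - β ≤ α' ⬝ᵥ xbar - β')
    -- feasible solution of the polar MCP
    (η : ℝ) (hη : 0 ≤ η) (y : Fin H → Fin n → ℝ) (z : Fin H → ℝ)
    (hy : (∑ h, y h) = xbar + η • γ) (hz : (∑ h, z h) = 1)
    (hAy : ∀ h, A.mulVec (y h) = z h • b)
    (hDy : ∀ h, (D h).mulVec (y h) - z h • d h ∈ Q h)
    (hyK : ∀ h, y h ∈ K) (hz0 : ∀ h, 0 ≤ z h)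
    -- zero duality gap
    (hgap : α ⬝ᵥ xbar - β = -η) :
    α ⬝ᵥ (xbar + η • γ) = β := by
  have key : ∀ h, z h * β ≤ α ⬝ᵥ y h := by
    intro h
    obtain ⟨hl, hv, hα, hβ⟩ := hfeas h
    have h1 : 0 ≤ lam h ⬝ᵥ y h := hl _ (hyK h)
    have h2 : 0 ≤ v h ⬝ᵥ ((D h).mulVec (y h) - z h • d h) := hv _ (hDy h)
    have h3 : α ⬝ᵥ y h = z h * (b ⬝ᵥ u h) + lam h ⬝ᵥ y h + v h ⬝ᵥ (D h).mulVec (y h) := by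
      rw [hα, add_dotProduct, add_dotProduct, mulVec_transpose, mulVec_transpose,
        ← dotProduct_mulVec, ← dotProduct_mulVec, hAy h, dotProduct_smul, smul_eq_mul,
        dotProduct_comm (u h) b]
    rw [dotProduct_sub, dotProduct_smul, smul_eq_mul, dotProduct_comm (v h) (d h)] at h2
    have h4 := mul_le_mul_of_nonneg_left hβ (hz0 h)
    rw [mul_add] at h4
    linarith
  have hlow : β ≤ α ⬝ᵥ (xbar + η • γ) := by
    rw [← hy, dotProduct_sum]
    calc β = ∑ h, z h * β := by rw [← Finset.sum_mul, hz, one_mul]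
      _ ≤ _ := Finset.sum_le_sum fun h _ => key h
  refine le_antisymm ?_ hlow
  rw [dotProduct_add, dotProduct_smul, smul_eq_mul]
  have := mul_le_mul_of_nonneg_left hnorm hη
  linarith
end

section
/- (Feasibility of the trivial-normalization membership problem.) Let σ_h ∈ int Q_h for each h and let x̄ ∈ ℝⁿ satisfy Ax̄ = b. Then the system: Σ_h y_h = x̄, Σ_h z_h = 1, A y_h = z_h b for all h, y_h ∈ K and z_h ≥ 0 for all h, D_h y_h + ησ_h − z_h d_h ∈ Q_h for all h, η ≥ 0, has a solution (y, z, η) if and only if x̄ ∈ K. -/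
open Matrix

open Filter Topology in
lemma aux_eventually {k : ℕ} (Q : Set (Fin k → ℝ)) (hQ : IsProperCone Q)
    (s v : Fin k → ℝ) (hs : s ∈ interior Q) :
    ∀ᶠ t : ℝ in atTop, v + t • s ∈ Q := by
  have h1 : Tendsto (fun t : ℝ => s + t⁻¹ • v) atTop (𝓝 s) := by
    have h2 : Tendsto (fun t : ℝ => s + t⁻¹ • v) atTop (𝓝 (s + (0 : ℝ) • v)) :=
      tendsto_const_nhds.add (tendsto_inv_atTop_zero.smul_const v)
    simpa using h2
  filter_upwards [h1.eventually (mem_interior_iff_mem_nhds.1 hs), eventually_gt_atTop 0]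
    with t ht htpos
  have h3 := hQ.2.2.1 _ ht t htpos.le
  rwa [smul_add, smul_smul, mul_inv_cancel₀ htpos.ne', one_smul, add_comm] at h3

lemma aux_add {k : ℕ} (K : Set (Fin k → ℝ)) (hK : IsProperCone K)
    (x y : Fin k → ℝ) (hx : x ∈ K) (hy : y ∈ K) : x + y ∈ K := by
  have h : (1/2 : ℝ) • x + (1/2 : ℝ) • y ∈ K :=
    hK.2.1 hx hy (by norm_num) (by norm_num) (by norm_num)
  have h2 := hK.2.2.1 _ h 2 (by norm_num)
  rw [smul_add, smul_smul, smul_smul] at h2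
  norm_num at h2
  exact h2

lemma aux_zero {k : ℕ} (K : Set (Fin k → ℝ)) (hK : IsProperCone K) : (0 : Fin k → ℝ) ∈ K := by
  obtain ⟨x, hx⟩ := hK.2.2.2.2
  simpa using hK.2.2.1 x (interior_subset hx) 0 le_rfl

/-- The trivial-normalization membership problem is feasible iff `x̄ ∈ K`. -/
theorem cut_stmt_12 {m n H : ℕ} (hH : 0 < H)
    (A : Matrix (Fin m) (Fin n) ℝ) (b : Fin m → ℝ)
    (K : Set (Fin n → ℝ)) (hK : IsProperCone K)
    (mq : Fin H → ℕ) (D : ∀ h : Fin H, Matrix (Fin (mq h)) (Fin n) ℝ)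
    (d : ∀ h : Fin H, Fin (mq h) → ℝ) (Q : ∀ h : Fin H, Set (Fin (mq h) → ℝ))
    (hQ : ∀ h, IsProperCone (Q h))
    (σ : ∀ h : Fin H, Fin (mq h) → ℝ) (hσ : ∀ h, σ h ∈ interior (Q h))
    (xbar : Fin n → ℝ) (hxbar : A.mulVec xbar = b) :
    (∃ (y : Fin H → Fin n → ℝ) (z : Fin H → ℝ) (η : ℝ),
      (∑ h, y h) = xbar ∧ (∑ h, z h) = 1 ∧
      (∀ h, A.mulVec (y h) = z h • b) ∧
      (∀ h, y h ∈ K) ∧ (∀ h, 0 ≤ z h) ∧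
      (∀ h, (D h).mulVec (y h) + η • σ h - z h • d h ∈ Q h) ∧
      0 ≤ η) ↔ xbar ∈ K := by
  constructor
  · rintro ⟨y, z, η, hy, -, -, hyK, -⟩
    rw [← hy]
    exact Finset.sum_induction y (· ∈ K) (aux_add K hK) (aux_zero K hK) (fun h _ => hyK h)
  · intro hx
    have hHpos : (0 : ℝ) < H := by exact_mod_cast hH
    have hev : ∀ᶠ t : ℝ in Filter.atTop, ∀ h,
        ((D h).mulVec ((H : ℝ)⁻¹ • xbar) - (H : ℝ)⁻¹ • d h) + t • σ h ∈ Q h :=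
      Filter.eventually_all.2 fun h => aux_eventually (Q h) (hQ h) (σ h) _ (hσ h)
    obtain ⟨η, hη, hη0⟩ := (hev.and (Filter.eventually_ge_atTop 0)).exists
    refine ⟨fun _ => (H : ℝ)⁻¹ • xbar, fun _ => (H : ℝ)⁻¹, η, ?_, ?_, ?_, ?_, ?_, ?_, hη0⟩
    · rw [Finset.sum_const, Finset.card_univ, Fintype.card_fin, ← Nat.cast_smul_eq_nsmul ℝ,
        smul_smul, mul_inv_cancel₀ hHpos.ne', one_smul]
    · rw [Finset.sum_const, Finset.card_univ, Fintype.card_fin, nsmul_eq_mul,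
        mul_inv_cancel₀ hHpos.ne']
    · intro h
      rw [Matrix.mulVec_smul, hxbar]
    · intro h
      exact hK.2.2.1 _ hx _ (by positivity)
    · intro h
      positivity
    · intro h
      have h1 := hη h
      rwa [sub_add_eq_add_sub] at h1
end

section
/- (Strong feasibility of the trivial-normalization membership problem.) Let σ_h ∈ int Q_h for each h and let x̄ ∈ ℝⁿ satisfy Ax̄ = b. Then there exists a solution (y, z, η) of the system Σ_h y_h = x̄, Σ_h z_h = 1, A y_h = z_h b for all h, z_h ≥ 0 for all h, D_h y_h + ησ_h − z_h d_h ∈ Q_h for all h, η ≥ 0, with additionally y_h ∈ int K for all h, if and only if x̄ ∈ int K. -/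
open Matrix

open scoped Pointwise in
/-- Positive scaling preserves the interior of a cone. -/
lemma smul_interior_aux {n : ℕ} {K : Set (Fin n → ℝ)} (hK : IsProperCone K)
    {x : Fin n → ℝ} (hx : x ∈ interior K) {t : ℝ} (ht : 0 < t) : t • x ∈ interior K := by
  have h1 : t • x ∈ t • interior K := Set.smul_mem_smul_set hx
  rw [← interior_smul₀ ht.ne'] at h1
  refine interior_mono ?_ h1
  rintro _ ⟨y, hy, rfl⟩
  exact hK.2.2.1 y hy t ht.le

/-- A large multiple of an interior point absorbs any vector. -/
lemma absorb_aux {n : ℕ} {Q : Set (Fin n → ℝ)} (hQ : IsProperCone Q)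
    {s : Fin n → ℝ} (hs : s ∈ interior Q) (v : Fin n → ℝ) :
    ∀ᶠ t : ℝ in Filter.atTop, v + t • s ∈ Q := by
  have h1 : Filter.Tendsto (fun t : ℝ => t⁻¹ • v + s) Filter.atTop (nhds s) := by
    have := (tendsto_inv_atTop_zero (𝕜 := ℝ)).smul_const v
    simpa using this.add_const s
  have h2 := h1.eventually (mem_interior_iff_mem_nhds.mp hs)
  filter_upwards [h2, Filter.eventually_gt_atTop 0] with t ht hpos
  have h3 := hQ.2.2.1 _ ht t hpos.le
  rwa [smul_add, smul_smul, mul_inv_cancel₀ hpos.ne', one_smul] at h3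

/-- The trivial-normalization membership problem is strongly feasible iff
`x̄ ∈ int K`. -/
theorem cut_stmt_13 {m n H : ℕ} (hH : 0 < H)
    (A : Matrix (Fin m) (Fin n) ℝ) (b : Fin m → ℝ)
    (K : Set (Fin n → ℝ)) (hK : IsProperCone K)
    (mq : Fin H → ℕ) (D : ∀ h : Fin H, Matrix (Fin (mq h)) (Fin n) ℝ)
    (d : ∀ h : Fin H, Fin (mq h) → ℝ) (Q : ∀ h : Fin H, Set (Fin (mq h) → ℝ))
    (hQ : ∀ h, IsProperCone (Q h))
    (σ : ∀ h : Fin H, Fin (mq h) → ℝ) (hσ : ∀ h, σ h ∈ interior (Q h))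
    (xbar : Fin n → ℝ) (hxbar : A.mulVec xbar = b) :
    (∃ (y : Fin H → Fin n → ℝ) (z : Fin H → ℝ) (η : ℝ),
      (∑ h, y h) = xbar ∧ (∑ h, z h) = 1 ∧
      (∀ h, A.mulVec (y h) = z h • b) ∧
      (∀ h, 0 ≤ z h) ∧
      (∀ h, (D h).mulVec (y h) + η • σ h - z h • d h ∈ Q h) ∧
      0 ≤ η ∧ (∀ h, y h ∈ interior K)) ↔ xbar ∈ interior K := by
  have hHp : (0 : ℝ) < (H : ℝ) := by exact_mod_cast hH
  constructor
  · rintro ⟨y, z, η, hy, -, -, -, -, -, hint⟩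
    have h1 : ∑ h : Fin H, (H : ℝ)⁻¹ • y h ∈ interior K := by
      refine hK.2.1.interior.sum_mem (fun _ _ => (inv_pos.mpr hHp).le) ?_ (fun h _ => hint h)
      simp [hHp.ne']
    have h2 := smul_interior_aux hK h1 hHp
    rwa [← Finset.smul_sum, smul_smul, mul_inv_cancel₀ hHp.ne', one_smul, hy] at h2
  · intro hx
    have hev : ∀ᶠ t : ℝ in Filter.atTop, ∀ h : Fin H,
        ((D h).mulVec ((H : ℝ)⁻¹ • xbar) - (H : ℝ)⁻¹ • d h) + t • σ h ∈ Q h :=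
      Filter.eventually_all.mpr fun h => absorb_aux (hQ h) (hσ h) _
    obtain ⟨η, h1, h2⟩ := (hev.and (Filter.eventually_ge_atTop 0)).exists
    refine ⟨fun _ => (H : ℝ)⁻¹ • xbar, fun _ => (H : ℝ)⁻¹, η, ?_, ?_, ?_, ?_, ?_, h2, ?_⟩
    · rw [← Finset.smul_sum, Finset.sum_const, Finset.card_univ, Fintype.card_fin,
        ← Nat.cast_smul_eq_nsmul ℝ, smul_smul, inv_mul_cancel₀ hHp.ne', one_smul]
    · simp [hHp.ne']
    · intro h
      rw [Matrix.mulVec_smul, hxbar]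
    · exact fun _ => (inv_pos.mpr hHp).le
    · intro h
      have h3 := h1 h
      rwa [sub_add_eq_add_sub] at h3
    · exact fun _ => smul_interior_aux hK hx (inv_pos.mpr hHp)
end

section
/- (Feasibility of the uniform-normalization membership problem.) Let ρ ∈ int K. If x̄ ∈ conv(∪_{h=1}^H {x ∈ ℝⁿ : Ax = b, D_h x − d_h ∈ Q_h}), then the system: Σ_h y_h = x̄, Σ_h z_h = 1, A y_h = z_h b for all h, y_h + ηρ ∈ K and z_h ≥ 0 for all h, D_h y_h − z_h d_h ∈ Q_h for all h, η ≥ 0, has a solution (y, z, η). -/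
open Matrix

/-- Feasibility of the uniform-normalization membership problem when `x̄`
lies in the convex hull of the (relaxed) disjunctive terms. -/
theorem cut_stmt_14 {m n H : ℕ}
    (A : Matrix (Fin m) (Fin n) ℝ) (b : Fin m → ℝ)
    (K : Set (Fin n → ℝ)) (hK : IsProperCone K)
    (mq : Fin H → ℕ) (D : ∀ h : Fin H, Matrix (Fin (mq h)) (Fin n) ℝ)
    (d : ∀ h : Fin H, Fin (mq h) → ℝ) (Q : ∀ h : Fin H, Set (Fin (mq h) → ℝ))
    (hQ : ∀ h, IsProperCone (Q h))
    (ρ : Fin n → ℝ) (hρ : ρ ∈ interior K)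
    (xbar : Fin n → ℝ) (hxbar : A.mulVec xbar = b)
    (hconv : xbar ∈ convexHull ℝ (⋃ h : Fin H,
      {x : Fin n → ℝ | A.mulVec x = b ∧ (D h).mulVec x - d h ∈ Q h})) :
    ∃ (y : Fin H → Fin n → ℝ) (z : Fin H → ℝ) (η : ℝ),
      (∑ h, y h) = xbar ∧ (∑ h, z h) = 1 ∧
      (∀ h, A.mulVec (y h) = z h • b) ∧
      (∀ h, y h + η • ρ ∈ K) ∧ (∀ h, 0 ≤ z h) ∧
      (∀ h, (D h).mulVec (y h) - z h • d h ∈ Q h) ∧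
      0 ≤ η := by
  have hzero : ∀ h, (0 : Fin (mq h) → ℝ) ∈ Q h := by
    intro h
    obtain ⟨_, _, hs, _, ⟨q, hq⟩⟩ := hQ h
    simpa using hs q (interior_subset hq) 0 le_rfl
  let S : Set (Fin n → ℝ) := {x | ∃ (y : Fin H → Fin n → ℝ) (z : Fin H → ℝ),
      (∑ h, y h) = x ∧ (∑ h, z h) = 1 ∧
      (∀ h, A.mulVec (y h) = z h • b) ∧ (∀ h, 0 ≤ z h) ∧
      (∀ h, (D h).mulVec (y h) - z h • d h ∈ Q h)}
  have hS : Convex ℝ S := by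
    rintro x ⟨y, z, h1, h2, h3, h4, h5⟩ x' ⟨y', z', h1', h2', h3', h4', h5'⟩ s t hs ht hst
    refine ⟨fun h => s • y h + t • y' h, fun h => s * z h + t * z' h, ?_, ?_, ?_, ?_, ?_⟩
    · rw [Finset.sum_add_distrib, ← Finset.smul_sum, ← Finset.smul_sum, h1, h1']
    · rw [Finset.sum_add_distrib, ← Finset.mul_sum, ← Finset.mul_sum, h2, h2']
      linarith
    · intro h
      rw [mulVec_add, mulVec_smul, mulVec_smul, h3, h3']
      module
    · intro h
      have := h4 h
      have := h4' h
      positivity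
    · intro h
      have := (hQ h).2.1 (h5 h) (h5' h) hs ht hst
      convert this using 1
      rw [mulVec_add, mulVec_smul, mulVec_smul]
      module
  have hsub : (⋃ h : Fin H,
      {x : Fin n → ℝ | A.mulVec x = b ∧ (D h).mulVec x - d h ∈ Q h}) ⊆ S := by
    intro x hx
    obtain ⟨k, hk1, hk2⟩ := Set.mem_iUnion.1 hx
    refine ⟨fun h => if h = k then x else 0, fun h => if h = k then 1 else 0,
      by simp, by simp, ?_, ?_, ?_⟩
    · intro h
      by_cases e : h = k
      · simp [e, hk1]
      · simp [e]
    · intro h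
      dsimp only
      split_ifs <;> norm_num
    · intro h
      by_cases e : h = k
      · subst e
        simpa using hk2
      · simpa [e] using hzero h
  obtain ⟨y, z, h1, h2, h3, h4, h5⟩ := convexHull_min hsub hS hconv
  have hev : ∀ h, ∀ᶠ t : ℝ in Filter.atTop, y h + t • ρ ∈ K := by
    intro h
    have ht : Filter.Tendsto (fun t : ℝ => t⁻¹ • y h + ρ) Filter.atTop (nhds ρ) := by
      have := (tendsto_inv_atTop_zero (𝕜 := ℝ)).smul_const (y h)
      simpa using this.add_const ρ
    filter_upwards [ht (mem_interior_iff_mem_nhds.1 hρ), Filter.eventually_gt_atTop 0] with t h6 h7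
    have := hK.2.2.1 _ h6 t h7.le
    rwa [smul_add, smul_smul, mul_inv_cancel₀ h7.ne', one_smul] at this
  obtain ⟨η, h6, h7⟩ := ((Filter.eventually_all.2 hev).and (Filter.eventually_ge_atTop 0)).exists
  exact ⟨y, z, η, h1, h2, h3, h6, h4, h5, h7⟩
end

section
/- (Strong feasibility of the uniform-normalization membership problem for split disjunctions.) Let ρ ∈ int K, let x̄ ∈ ℝⁿ satisfy Ax̄ = b, let π ∈ ℝⁿ, π₀ ∈ ℝ, and suppose the set {x ∈ ℝⁿ : Ax = b, x ∈ K, πᵀx ≤ π₀} ∪ {x ∈ ℝⁿ : Ax = b, x ∈ K, πᵀx ≥ π₀ + 1} is nonempty. Then the two-term system with disjunctive constraints (−πᵀy_1 ≥ −z_1 π₀) and (πᵀy_2 ≥ z_2 (π₀ + 1)), namely: y_1 + y_2 = x̄, z_1 + z_2 = 1, A y_1 = z_1 b, A y_2 = z_2 b, z_1, z_2 ≥ 0, πᵀy_1 ≤ z_1 π₀, πᵀy_2 ≥ z_2 (π₀ + 1), η ≥ 0, y_1 + ηρ ∈ K, y_2 + ηρ ∈ K, admits a solution, and moreover admits a solution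 with y_1 + ηρ ∈ int K and y_2 + ηρ ∈ int K. -/
open Matrix

/-- Adding a large multiple of an interior point moves any vector into the interior. -/
theorem eventually_interior {n : ℕ} (K : Set (Fin n → ℝ)) (hK : IsProperCone K)
    (ρ : Fin n → ℝ) (hρ : ρ ∈ interior K) (y : Fin n → ℝ) :
    ∀ᶠ η : ℝ in Filter.atTop, y + η • ρ ∈ interior K := by
  have ht : Filter.Tendsto (fun η : ℝ => η⁻¹ • y + ρ) Filter.atTop (nhds ((0 : ℝ) • y + ρ)) :=
    (tendsto_inv_atTop_zero.smul_const y).add_const ρ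
  rw [zero_smul, zero_add] at ht
  filter_upwards [ht.eventually (isOpen_interior.mem_nhds hρ), Filter.eventually_gt_atTop 0]
    with η h1 h2
  have h3 : η • (η⁻¹ • y + ρ) = y + η • ρ := by
    rw [smul_add, smul_smul, mul_inv_cancel₀ h2.ne', one_smul]
  rw [← h3]
  have hopen : IsOpen ((fun x : Fin n → ℝ => η • x) '' interior K) :=
    (isOpenMap_smul₀ h2.ne') _ isOpen_interior
  refine interior_maximal ?_ hopen ⟨_, h1, rfl⟩
  rintro _ ⟨x, hx, rfl⟩
  exact hK.2.2.1 x (interior_subset hx) η h2.le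

/-- Strong feasibility of the uniform-normalization membership problem for a
split disjunction, assuming the disjunctive set is nonempty. -/
theorem cut_stmt_15 {m n : ℕ}
    (A : Matrix (Fin m) (Fin n) ℝ) (b : Fin m → ℝ)
    (K : Set (Fin n → ℝ)) (hK : IsProperCone K)
    (ρ : Fin n → ℝ) (hρ : ρ ∈ interior K)
    (xbar : Fin n → ℝ) (hxbar : A.mulVec xbar = b)
    (π : Fin n → ℝ) (π₀ : ℝ)
    (hne : ({x : Fin n → ℝ | A.mulVec x = b ∧ x ∈ K ∧ π ⬝ᵥ x ≤ π₀} ∪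
        {x : Fin n → ℝ | A.mulVec x = b ∧ x ∈ K ∧ π₀ + 1 ≤ π ⬝ᵥ x}).Nonempty) :
    (∃ (y₁ y₂ : Fin n → ℝ) (z₁ z₂ η : ℝ),
      y₁ + y₂ = xbar ∧ z₁ + z₂ = 1 ∧
      A.mulVec y₁ = z₁ • b ∧ A.mulVec y₂ = z₂ • b ∧
      0 ≤ z₁ ∧ 0 ≤ z₂ ∧
      π ⬝ᵥ y₁ ≤ z₁ * π₀ ∧ z₂ * (π₀ + 1) ≤ π ⬝ᵥ y₂ ∧
      0 ≤ η ∧ y₁ + η • ρ ∈ K ∧ y₂ + η • ρ ∈ K) ∧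
    (∃ (y₁ y₂ : Fin n → ℝ) (z₁ z₂ η : ℝ),
      y₁ + y₂ = xbar ∧ z₁ + z₂ = 1 ∧
      A.mulVec y₁ = z₁ • b ∧ A.mulVec y₂ = z₂ • b ∧
      0 ≤ z₁ ∧ 0 ≤ z₂ ∧
      π ⬝ᵥ y₁ ≤ z₁ * π₀ ∧ z₂ * (π₀ + 1) ≤ π ⬝ᵥ y₂ ∧
      0 ≤ η ∧ y₁ + η • ρ ∈ interior K ∧ y₂ + η • ρ ∈ interior K) := by
  have main : ∃ (y₁ y₂ : Fin n → ℝ) (z₁ z₂ : ℝ),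
      y₁ + y₂ = xbar ∧ z₁ + z₂ = 1 ∧
      A.mulVec y₁ = z₁ • b ∧ A.mulVec y₂ = z₂ • b ∧
      0 ≤ z₁ ∧ 0 ≤ z₂ ∧
      π ⬝ᵥ y₁ ≤ z₁ * π₀ ∧ z₂ * (π₀ + 1) ≤ π ⬝ᵥ y₂ := by
    obtain ⟨x, ⟨hA, -, hx⟩ | ⟨hA, -, hx⟩⟩ := hne
    · by_cases h : π ⬝ᵥ xbar ≤ π₀
      · exact ⟨xbar, 0, 1, 0, by simp, by simp, by simpa using hxbar, by simp,
          by simp, by simp, by simpa using h, by simp⟩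
      · refine ⟨x, xbar - x, 1, 0, by simp, by simp, by simpa using hA,
          by simp [Matrix.mulVec_sub, hA, hxbar], by simp, by simp, by simpa using hx, ?_⟩
        rw [dotProduct_sub]
        linarith
    · by_cases h : π₀ + 1 ≤ π ⬝ᵥ xbar
      · exact ⟨0, xbar, 0, 1, by simp, by simp, by simp, by simpa using hxbar,
          by simp, by simp, by simp, by simpa using h⟩
      · refine ⟨xbar - x, x, 0, 1, by simp, by simp,
          by simp [Matrix.mulVec_sub, hA, hxbar], by simpa using hA, by simp, by simp, ?_,
          by simpa using hx⟩
        rw [dotProduct_sub]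
        linarith
  obtain ⟨y₁, y₂, z₁, z₂, h1, h2, h3, h4, h5, h6, h7, h8⟩ := main
  obtain ⟨η, ha, hb, hc⟩ := ((eventually_interior K hK ρ hρ y₁).and
    ((eventually_interior K hK ρ hρ y₂).and (Filter.eventually_ge_atTop 0))).exists
  exact ⟨⟨y₁, y₂, z₁, z₂, η, h1, h2, h3, h4, h5, h6, h7, h8, hc,
      interior_subset ha, interior_subset hb⟩,
    ⟨y₁, y₂, z₁, z₂, η, h1, h2, h3, h4, h5, h6, h7, h8, hc, ha, hb⟩⟩
end

section
/- Let K ⊆ ℝⁿ be a proper cone, ρ ∈ int K, x̄ ∈ ℝⁿ, and H ≥ 1 an integer. Let η̄ = min{η ≥ 0 : x̄ + ηρ ∈ K} (this minimum exists since ρ ∈ int K), and set ξ = x̄ + η̄ρ. Then the problem min{λᵀx̄ : λ ∈ K*, ρᵀλ ≤ 1/H} has optimal value −η̄/H, the minimum is attained, and every minimizer λ₀ satisfies the complementarity condition λ₀ᵀξ = 0. -/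
open Matrix

/-- The reduced problem `min {λᵀx̄ : λ ∈ K*, ρᵀλ ≤ 1/H}` has optimal value
`−η̄/H`, attained, and every minimizer `λ₀` satisfies `λ₀ᵀξ = 0` where
`ξ = x̄ + η̄ρ`. -/
theorem cut_stmt_16 {n : ℕ} (K : Set (Fin n → ℝ)) (hK : IsProperCone K)
    (ρ : Fin n → ℝ) (hρ : ρ ∈ interior K) (xbar : Fin n → ℝ)
    (H : ℕ) (hH : 1 ≤ H) (etabar : ℝ)
    (hetabar : IsLeast {η : ℝ | 0 ≤ η ∧ xbar + η • ρ ∈ K} etabar) :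
    IsLeast {t : ℝ | ∃ lam ∈ dualCone' K, ρ ⬝ᵥ lam ≤ 1 / (H : ℝ) ∧ t = lam ⬝ᵥ xbar}
        (-(etabar / (H : ℝ))) ∧
    ∀ lam₀ ∈ dualCone' K, ρ ⬝ᵥ lam₀ ≤ 1 / (H : ℝ) →
      lam₀ ⬝ᵥ xbar = -(etabar / (H : ℝ)) →
      lam₀ ⬝ᵥ (xbar + etabar • ρ) = 0 := by
  obtain ⟨hcl, hconv, hcone, -, hne⟩ := hK
  obtain ⟨⟨h0, hxi⟩, hmin⟩ := hetabar
  have hHpos : (0 : ℝ) < H := by exact_mod_cast hH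
  have key : ∀ lam : Fin n → ℝ,
      lam ⬝ᵥ (xbar + etabar • ρ) = lam ⬝ᵥ xbar + etabar * (ρ ⬝ᵥ lam) := by
    intro lam
    rw [dotProduct_add, dotProduct_smul, dotProduct_comm ρ lam, smul_eq_mul]
  refine ⟨⟨?_, ?_⟩, ?_⟩
  · rcases h0.eq_or_lt with h | hpos
    · refine ⟨0, ?_, ?_, ?_⟩
      · intro x _
        simp
      · rw [dotProduct_zero]; positivity
      · simp [← h]
    · have hnot : xbar + etabar • ρ ∉ interior K := by
        intro hin
        have hc : Continuous fun t : ℝ => xbar + t • ρ := by fun_prop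
        have h1 : ∀ᶠ t in nhds etabar, xbar + t • ρ ∈ interior K :=
          hc.continuousAt.eventually (isOpen_interior.mem_nhds hin)
        have h2 : ∀ᶠ t in nhds etabar, 0 < t := lt_mem_nhds hpos
        have h3 : ∀ᶠ t in nhdsWithin etabar (Set.Iio etabar), t < etabar :=
          self_mem_nhdsWithin
        obtain ⟨t, ⟨ht1, ht2⟩, ht3⟩ :=
          (((h1.and h2).filter_mono nhdsWithin_le_nhds).and h3).exists
        have := hmin ⟨ht2.le, interior_subset ht1⟩
        linarith
      obtain ⟨f, hf⟩ := geometric_hahn_banach_open_point hconv.interior isOpen_interior hnot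
      have hfle : ∀ x ∈ K, f x ≤ f (xbar + etabar • ρ) := by
        intro x hx
        have hx' : x ∈ closure (interior K) := by
          rw [hconv.closure_interior_eq_closure_of_nonempty_interior hne]
          exact subset_closure hx
        have hsub : closure (interior K) ⊆ {y | f y ≤ f (xbar + etabar • ρ)} :=
          closure_minimal (fun y hy => (hf y hy).le)
            (isClosed_le f.continuous continuous_const)
        exact hsub hx'
      have hxi0 : 0 ≤ f (xbar + etabar • ρ) := by
        have := hfle _ (hcone _ hxi 0 le_rfl)
        simpa using this
      have hxi1 : f (xbar + etabar • ρ) ≤ 0 := by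
        have := hfle _ (hcone _ hxi 2 (by norm_num))
        rw [map_smul, smul_eq_mul] at this
        linarith
      have hxieq := le_antisymm hxi1 hxi0
      have hρ0 := hf ρ hρ
      rw [hxieq] at hρ0 hfle
      obtain ⟨v, hv⟩ : ∃ v : Fin n → ℝ, ∀ x, v ⬝ᵥ x = f x := by
        refine ⟨(dotProductEquiv ℝ (Fin n)).symm f.toLinearMap, fun x => ?_⟩
        exact LinearMap.congr_fun
          ((dotProductEquiv ℝ (Fin n)).apply_symm_apply f.toLinearMap) x
      have hc : 1 / (H * f ρ) < 0 :=
        one_div_neg.2 (mul_neg_of_pos_of_neg hHpos hρ0)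
      have hr : ρ ⬝ᵥ ((1 / (H * f ρ)) • v) = 1 / (H : ℝ) := by
        rw [dotProduct_smul, dotProduct_comm, hv, smul_eq_mul]
        field_simp [hρ0.ne]
      refine ⟨(1 / (H * f ρ)) • v, ?_, hr.le, ?_⟩
      · intro x hx
        rw [smul_dotProduct, hv, smul_eq_mul]
        exact mul_nonneg_of_nonpos_of_nonpos hc.le (hfle x hx)
      · have hk := key ((1 / (H * f ρ)) • v)
        rw [hr, smul_dotProduct, hv, hxieq, smul_zero] at hk
        have : etabar * (1 / (H : ℝ)) = etabar / H := by ring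
        linarith
  · rintro t ⟨lam, hl, hr, rfl⟩
    have h1 := hl _ hxi
    rw [key] at h1
    have h2 := mul_le_mul_of_nonneg_left hr h0
    have : etabar * (1 / (H : ℝ)) = etabar / H := by ring
    linarith
  · intro lam hl hr he
    have h1 := hl _ hxi
    have h3 := key lam
    have h2 := mul_le_mul_of_nonneg_left hr h0
    have : etabar * (1 / (H : ℝ)) = etabar / H := by ring
    linarith
end

section
/- (Sufficient condition for optimality of a K* cut under the standard normalization.) Let ρ ∈ int K, σ_h ∈ int Q_h, x̄ ∈ ℝⁿ with Ax̄ = b, and η̄ ≥ 0. Suppose x̄ + η̄ρ ∈ K and D_h x̄ + η̄σ_h − d_h ∈ Q_h for every h = 1,…,H. Then (y_h, z_h) = (x̄/H, 1/H) for all h together with η = η̄/H is feasible for the standard-normalized membership system: Σ_h y_h = x̄, Σ_h z_h = 1, A y_h = z_h b, y_h + ηρ ∈ K, D_h y_h + ησ_h − z_h d_h ∈ Q_h, z_h ≥ 0, η ≥ 0. Consequently, every CGCP-feasible tuple (α, β, u, λ, v) satisfying the standard normalization Σ_h (ρᵀλ_h + σ_hᵀv_h) ≤ 1 has objective value αᵀx̄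 − β ≥ −η̄/H; in particular, if λ̄ ∈ K* satisfies H·ρᵀλ̄ ≤ 1 and λ̄ᵀx̄ = −η̄/H, then the tuple with α = λ̄, β = 0, u_h = 0, λ_h = λ̄, v_h = 0 for all h is optimal for the standard-normalized CGCP. -/
open Matrix

/-- Sufficient condition for optimality of a `K*` cut under the standard
normalization: if `x̄ + η̄ρ ∈ K` and `D_h x̄ + η̄σ_h − d_h ∈ Q_h` for all `h`,
then `(x̄/H, 1/H, η̄/H)` is feasible for the standard-normalized membership
system; consequently every standard-normalized CGCP-feasible tuple has
objective value at least `−η̄/H`, and any `λ̄ ∈ K*` with `H·ρᵀλ̄ ≤ 1` and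
`λ̄ᵀx̄ = −η̄/H` yields an optimal `K*` cut. -/
theorem cut_stmt_17 {m n H : ℕ} (hH : 0 < H)
    (A : Matrix (Fin m) (Fin n) ℝ) (b : Fin m → ℝ)
    (K : Set (Fin n → ℝ)) (hK : IsProperCone K)
    (mq : Fin H → ℕ) (D : ∀ h : Fin H, Matrix (Fin (mq h)) (Fin n) ℝ)
    (d : ∀ h : Fin H, Fin (mq h) → ℝ) (Q : ∀ h : Fin H, Set (Fin (mq h) → ℝ))
    (hQ : ∀ h, IsProperCone (Q h))
    (ρ : Fin n → ℝ) (hρ : ρ ∈ interior K)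
    (σ : ∀ h : Fin H, Fin (mq h) → ℝ) (hσ : ∀ h, σ h ∈ interior (Q h))
    (xbar : Fin n → ℝ) (hxbar : A.mulVec xbar = b)
    (etabar : ℝ) (hetabar0 : 0 ≤ etabar)
    (hxi : xbar + etabar • ρ ∈ K)
    (hDbar : ∀ h, (D h).mulVec xbar + etabar • σ h - d h ∈ Q h) :
    -- (a) feasibility of (x̄/H, 1/H, η̄/H) for the membership system
    ((∑ _h : Fin H, (H : ℝ)⁻¹ • xbar) = xbar ∧
     (∑ _h : Fin H, (H : ℝ)⁻¹) = 1 ∧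
     (∀ _h : Fin H, A.mulVec ((H : ℝ)⁻¹ • xbar) = (H : ℝ)⁻¹ • b) ∧
     (∀ _h : Fin H, (H : ℝ)⁻¹ • xbar + (etabar / (H : ℝ)) • ρ ∈ K) ∧
     (∀ h : Fin H, (D h).mulVec ((H : ℝ)⁻¹ • xbar) + (etabar / (H : ℝ)) • σ h
        - (H : ℝ)⁻¹ • d h ∈ Q h) ∧
     (∀ _h : Fin H, (0 : ℝ) ≤ (H : ℝ)⁻¹) ∧ 0 ≤ etabar / (H : ℝ)) ∧
    -- (b) lower bound on the normalized CGCP objective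
    (∀ (α : Fin n → ℝ) (β : ℝ) (u : Fin H → Fin m → ℝ)
        (lam : Fin H → Fin n → ℝ) (v : ∀ h : Fin H, Fin (mq h) → ℝ),
        CGCPFeasible A b K mq D d Q α β u lam v →
        (∑ h, (ρ ⬝ᵥ lam h + σ h ⬝ᵥ v h)) ≤ 1 →
        -(etabar / (H : ℝ)) ≤ α ⬝ᵥ xbar - β) ∧
    -- (c) optimality of the K* cut
    (∀ lambar : Fin n → ℝ, lambar ∈ dualCone' K →
        (H : ℝ) * (ρ ⬝ᵥ lambar) ≤ 1 →
        lambar ⬝ᵥ xbar = -(etabar / (H : ℝ)) →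
        CGCPFeasible A b K mq D d Q lambar 0 (fun _ => 0) (fun _ => lambar)
          (fun _ => 0) ∧
        (∑ h : Fin H, (ρ ⬝ᵥ lambar + σ h ⬝ᵥ (0 : Fin (mq h) → ℝ))) ≤ 1 ∧
        (∀ (α : Fin n → ℝ) (β : ℝ) (u : Fin H → Fin m → ℝ)
            (lam : Fin H → Fin n → ℝ) (v : ∀ h : Fin H, Fin (mq h) → ℝ),
            CGCPFeasible A b K mq D d Q α β u lam v →
            (∑ h, (ρ ⬝ᵥ lam h + σ h ⬝ᵥ v h)) ≤ 1 →
            lambar ⬝ᵥ xbar - 0 ≤ α ⬝ᵥ xbar - β)) := by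
  have hH' : (0 : ℝ) < (H : ℝ) := by exact_mod_cast hH
  have hb : ∀ (α : Fin n → ℝ) (β : ℝ) (u : Fin H → Fin m → ℝ)
        (lam : Fin H → Fin n → ℝ) (v : ∀ h : Fin H, Fin (mq h) → ℝ),
        CGCPFeasible A b K mq D d Q α β u lam v →
        (∑ h, (ρ ⬝ᵥ lam h + σ h ⬝ᵥ v h)) ≤ 1 →
        -(etabar / (H : ℝ)) ≤ α ⬝ᵥ xbar - β := by
    intro α β u lam v hf hn
    have key : ∀ h : Fin H,
        -etabar * (ρ ⬝ᵥ lam h + σ h ⬝ᵥ v h) ≤ α ⬝ᵥ xbar - β := by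
      intro h
      obtain ⟨h1, h2, h3, h4⟩ := hf h
      have e1 := h1 _ hxi
      have e2 := h2 _ (hDbar h)
      have e3 : α ⬝ᵥ xbar = b ⬝ᵥ u h + lam h ⬝ᵥ xbar + v h ⬝ᵥ (D h).mulVec xbar := by
        rw [h3, add_dotProduct, add_dotProduct, Matrix.mulVec_transpose,
          Matrix.mulVec_transpose, ← Matrix.dotProduct_mulVec, ← Matrix.dotProduct_mulVec,
          hxbar, dotProduct_comm (u h) b]
      rw [dotProduct_add, dotProduct_smul, smul_eq_mul, dotProduct_comm (lam h) ρ] at e1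
      rw [dotProduct_sub, dotProduct_add, dotProduct_smul, smul_eq_mul,
        dotProduct_comm (v h) (σ h), dotProduct_comm (v h) (d h)] at e2
      linarith
    have hs := Finset.sum_le_sum (fun h (_ : h ∈ Finset.univ) => key h)
    rw [← Finset.mul_sum, Finset.sum_const, Finset.card_univ, Fintype.card_fin,
      nsmul_eq_mul] at hs
    have h5 : -etabar ≤ (H : ℝ) * (α ⬝ᵥ xbar - β) := by nlinarith
    rw [← neg_div, div_le_iff₀ hH']
    linarith
  refine ⟨⟨?_, ?_, ?_, ?_, ?_, ?_, ?_⟩, hb, ?_⟩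
  · rw [Finset.sum_const, Finset.card_univ, Fintype.card_fin, ← Nat.cast_smul_eq_nsmul ℝ,
      smul_smul, mul_inv_cancel₀ hH'.ne', one_smul]
  · rw [Finset.sum_const, Finset.card_univ, Fintype.card_fin, nsmul_eq_mul,
      mul_inv_cancel₀ hH'.ne']
  · intro _
    rw [Matrix.mulVec_smul, hxbar]
  · intro _
    have := hK.2.2.1 _ hxi (H : ℝ)⁻¹ (inv_nonneg.2 hH'.le)
    rwa [smul_add, smul_smul, mul_comm, ← div_eq_mul_inv] at this
  · intro h
    have := (hQ h).2.2.1 _ (hDbar h) (H : ℝ)⁻¹ (inv_nonneg.2 hH'.le)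
    rwa [smul_sub, smul_add, smul_smul, mul_comm, ← div_eq_mul_inv,
      ← Matrix.mulVec_smul] at this
  · intro _
    exact inv_nonneg.2 hH'.le
  · exact div_nonneg hetabar0 hH'.le
  · intro lambar hl hn he
    refine ⟨?_, ?_, ?_⟩
    · intro h
      refine ⟨hl, ?_, ?_, ?_⟩
      · intro x _
        simp
      · simp
      · simp
    · simpa using hn
    · intro α β u lam v hf hn'
      rw [sub_zero, he]
      exact hb α β u lam v hf hn'
end

section
/- (Monoidal-type cut strengthening for split cuts.) Split the variables as x = (x₁, x₂) ∈ ℝ^{n₁} × ℝ^{n₂} with K = K₁ × K₂, A = [A₁ A₂], and π = (π₁, π₂). Suppose (α, β, u₁, u₂, λ₁, λ₂, v₁, v₂) satisfies: α = Aᵀu₁ + λ₁ − v₁π, α = Aᵀu₂ + λ₂ + v₂π, β ≤ bᵀu₁ − v₁π₀, β ≤ bᵀu₂ + v₂(π₀ + 1), with λ₁, λ₂ ∈ K* and v₁, v₂ ≥ 0. Let δπ ∈ ℤ^{n₂} and α̃₂ ∈ ℝ^{n₂} satisfy α̃₂ − A₂ᵀu₁ + v₁(π₂ + δπ) ∈ K₂*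 and α̃₂ − A₂ᵀu₂ − v₂(π₂ + δπ) ∈ K₂*. Then, with α̃ = (α₁, α̃₂) and π̃ = (π₁, π₂ + δπ), the inequality α̃ᵀx ≥ β holds for every x in the disjunctive set D̃ = {x : Ax = b, x ∈ K, π̃ᵀx ≤ π₀} ∪ {x : Ax = b, x ∈ K, π̃ᵀx ≥ π₀ + 1}. -/
open Matrix

/-- Monoidal-type strengthening for split cuts: given Farkas certificates for
the split disjunction `(πᵀx ≤ π₀) ∨ (πᵀx ≥ π₀ + 1)`, and `δπ ∈ ℤ^{n₂}`,
`α̃₂` as below, the strengthened inequality `α̃ᵀx ≥ β` is valid for the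
disjunctive set associated with `π̃ = (π₁, π₂ + δπ)`. -/
theorem cut_stmt_19 {m n₁ n₂ : ℕ}
    (A₁ : Matrix (Fin m) (Fin n₁) ℝ) (A₂ : Matrix (Fin m) (Fin n₂) ℝ)
    (b : Fin m → ℝ)
    (K₁ : Set (Fin n₁ → ℝ)) (K₂ : Set (Fin n₂ → ℝ))
    (hK₁ : IsProperCone K₁) (hK₂ : IsProperCone K₂)
    (π₁ : Fin n₁ → ℝ) (π₂ : Fin n₂ → ℝ) (π₀ : ℝ)
    (α₁ : Fin n₁ → ℝ) (α₂ : Fin n₂ → ℝ) (β : ℝ)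
    (u₁ u₂ : Fin m → ℝ)
    (lam₁₁ lam₂₁ : Fin n₁ → ℝ) (lam₁₂ lam₂₂ : Fin n₂ → ℝ)
    (v₁ v₂ : ℝ)
    (hlam₁ : lam₁₁ ∈ dualCone' K₁ ∧ lam₁₂ ∈ dualCone' K₂)
    (hlam₂ : lam₂₁ ∈ dualCone' K₁ ∧ lam₂₂ ∈ dualCone' K₂)
    (hv₁ : 0 ≤ v₁) (hv₂ : 0 ≤ v₂)
    -- α = Aᵀu₁ + λ₁ − v₁π, componentwise
    (heq₁₁ : α₁ = A₁ᵀ.mulVec u₁ + lam₁₁ - v₁ • π₁)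
    (heq₁₂ : α₂ = A₂ᵀ.mulVec u₁ + lam₁₂ - v₁ • π₂)
    -- α = Aᵀu₂ + λ₂ + v₂π, componentwise
    (heq₂₁ : α₁ = A₁ᵀ.mulVec u₂ + lam₂₁ + v₂ • π₁)
    (heq₂₂ : α₂ = A₂ᵀ.mulVec u₂ + lam₂₂ + v₂ • π₂)
    (hβ₁ : β ≤ b ⬝ᵥ u₁ - v₁ * π₀)
    (hβ₂ : β ≤ b ⬝ᵥ u₂ + v₂ * (π₀ + 1))
    -- strengthened coefficients
    (δπ : Fin n₂ → ℤ) (αt₂ : Fin n₂ → ℝ)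
    (hαt₁ : αt₂ - A₂ᵀ.mulVec u₁ + v₁ • (π₂ + fun i => (δπ i : ℝ)) ∈ dualCone' K₂)
    (hαt₂ : αt₂ - A₂ᵀ.mulVec u₂ - v₂ • (π₂ + fun i => (δπ i : ℝ)) ∈ dualCone' K₂) :
    -- validity of α̃ᵀx ≥ β on the strengthened disjunctive set
    ∀ (x₁ : Fin n₁ → ℝ) (x₂ : Fin n₂ → ℝ),
      A₁.mulVec x₁ + A₂.mulVec x₂ = b → x₁ ∈ K₁ → x₂ ∈ K₂ →
      (π₁ ⬝ᵥ x₁ + (π₂ + fun i => (δπ i : ℝ)) ⬝ᵥ x₂ ≤ π₀ ∨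
        π₀ + 1 ≤ π₁ ⬝ᵥ x₁ + (π₂ + fun i => (δπ i : ℝ)) ⬝ᵥ x₂) →
      β ≤ α₁ ⬝ᵥ x₁ + αt₂ ⬝ᵥ x₂ := by
  intro x₁ x₂ hb hx₁ hx₂ hd
  have key : ∀ u : Fin m → ℝ,
      b ⬝ᵥ u = (A₁ᵀ.mulVec u) ⬝ᵥ x₁ + (A₂ᵀ.mulVec u) ⬝ᵥ x₂ := by
    intro u
    rw [← hb, add_dotProduct, Matrix.mulVec_transpose, Matrix.mulVec_transpose,
      ← Matrix.dotProduct_mulVec, ← Matrix.dotProduct_mulVec,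
      dotProduct_comm u, dotProduct_comm u]
  generalize (π₂ + fun i => (δπ i : ℝ)) = p at *
  rcases hd with hd | hd
  · have h1 := hlam₁.1 x₁ hx₁
    have h2 := hαt₁ x₂ hx₂
    have h3 := key u₁
    have h4 := mul_le_mul_of_nonneg_left hd hv₁
    rw [heq₁₁]
    simp only [add_dotProduct, sub_dotProduct, smul_dotProduct, smul_eq_mul] at h2 ⊢
    linarith
  · have h1 := hlam₂.1 x₁ hx₁
    have h2 := hαt₂ x₂ hx₂
    have h3 := key u₂
    have h4 := mul_le_mul_of_nonneg_left hd hv₂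
    rw [heq₂₁]
    simp only [add_dotProduct, sub_dotProduct, smul_dotProduct, smul_eq_mul] at h2 ⊢
    linarith
end
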